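/- Let n ≥ 3 and let X ⊆ ℂ^n be an open set, with d the Euclidean distance on ℂ^n. Let Ω be an open set with compact closure contained in X and let ρ : Ω → ℝ be a smooth function such that the set {z ∈ Ω : a ≤ ρ(z) ≤ b} is compact and contained in Ω, and such that at each point of Ω the Levi form of ρ has at least 2 positive eigenvalues. Assume that ρ has at most one critical point in {z ∈ Ω : a ≤ ρ(z) ≤ b}, and that if q is a critical point of ρ there, then a < ρ(q) < b and q is a non-degenerate critical point. Let K be a compact subset of X with K ∩ Ω = ∅. Assume f : 𝔻̄ → X is a continuous map, holomorphic on 𝔻, such that f(b𝔻) ⊆ {z ∈ Ω : ρ(z) > a}, and let r with 0 < r < 1 be such that f(𝔻̄ \ r𝔻) ∩ K = ∅. Then for every ε > 0 there exists a continuous map g : 𝔻̄ → X, holomorphic on 𝔻, with: (i) g(b𝔻) ⊆ {z ∈ Ω : ρ(z) > b}; (ii) d(g(ζ), f(ζ)) < ε for all |ζ| ≤ r; (iii) g(𝔻̄ \ r𝔻) ∩ K = ∅; (iv) g(0) = f(0); (v) g′(0) = λ·f′(0) for some λ with r < λ < 1. -/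

import Mathlib

open Metric Topology Filter

theorem exists_pow_smul_approx_scalar (f : C(sphere (0 : ℂ) 1, ℂ)) {ε : ℝ} (hε : 0 < ε) :
    ∃ (M : ℕ) (P : ℂ → ℂ), Differentiable ℂ P ∧
      ∀ ζ : sphere (0 : ℂ) 1, ‖(ζ : ℂ) ^ M * f ζ - P ζ‖ < ε := by
  have exact_rep : ∀ g ∈ (polynomialFunctions (sphere (0 : ℂ) 1)).starClosure,
      ∃ (M : ℕ) (P Q : ℂ → ℂ), Differentiable ℂ P ∧ Differentiable ℂ Q ∧
        ∀ ζ : sphere (0 : ℂ) 1, (ζ : ℂ) ^ M * g ζ = P ζ ∧ (ζ : ℂ) ^ M * star (g ζ) = Q ζ := by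
    intro g hg
    rw [polynomialFunctions.starClosure_eq_adjoin_X] at hg
    induction hg using StarAlgebra.adjoin_induction with
    | mem x hx =>
      rw [Set.mem_singleton_iff] at hx
      subst hx
      refine ⟨1, fun z => z ^ 2, fun _ => 1, by fun_prop, by fun_prop, fun ζ => ?_⟩
      have hζ : (ζ : ℂ) * (starRingEnd ℂ) ζ = 1 := by
        rw [Complex.mul_conj, Complex.normSq_eq_norm_sq, norm_eq_of_mem_sphere]; norm_num
      constructor
      · simp; ring
      · simpa using hζ
    | algebraMap c =>
      refine ⟨0, fun _ => c, fun _ => star c, by fun_prop, by fun_prop, fun ζ => ?_⟩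
      simp
    | add x y _ _ hx hy =>
      obtain ⟨M, P, Q, hP, hQ, h⟩ := hx
      obtain ⟨M', P', Q', hP', hQ', h'⟩ := hy
      refine ⟨M + M', fun z => z ^ M' * P z + z ^ M * P' z,
        fun z => z ^ M' * Q z + z ^ M * Q' z, by fun_prop, by fun_prop, fun ζ => ?_⟩
      simp only [← (h ζ).1, ← (h ζ).2, ← (h' ζ).1, ← (h' ζ).2, ContinuousMap.add_apply, star_add]
      constructor <;> ring
    | mul x y _ _ hx hy =>
      obtain ⟨M, P, Q, hP, hQ, h⟩ := hx
      obtain ⟨M', P', Q', hP', hQ', h'⟩ := hy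
      refine ⟨M + M', fun z => P z * P' z,
        fun z => Q z * Q' z, by fun_prop, by fun_prop, fun ζ => ?_⟩
      simp only [← (h ζ).1, ← (h ζ).2, ← (h' ζ).1, ← (h' ζ).2, ContinuousMap.mul_apply, star_mul]
      constructor <;> ring
    | star x _ hx =>
      obtain ⟨M, P, Q, hP, hQ, h⟩ := hx
      refine ⟨M, Q, P, hQ, hP, fun ζ => ⟨?_, ?_⟩⟩
      · simpa using (h ζ).2
      · simpa using (h ζ).1
  have hf : f ∈ (polynomialFunctions (sphere (0 : ℂ) 1)).starClosure.topologicalClosure := by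
    rw [polynomialFunctions.starClosure_topologicalClosure]; trivial
  obtain ⟨g, hg, hfg⟩ := Metric.mem_closure_iff.1 hf ε hε
  obtain ⟨M, P, Q, hP, -, h⟩ := exact_rep g hg
  refine ⟨M, P, hP, fun ζ => ?_⟩
  rw [← (h ζ).1, ← mul_sub, norm_mul, norm_pow, norm_eq_of_mem_sphere, one_pow, one_mul,
    ← dist_eq_norm]
  exact (ContinuousMap.dist_apply_le_dist ζ).trans_lt hfg

section Vector
variable {E : Type*} [NormedAddCommGroup E] [NormedSpace ℂ E] [FiniteDimensional ℂ E]

/-- On the unit circle a continuous map is uniformly approximable by `ζ ^ (-M)` times an entire map. -/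
theorem exists_pow_smul_approx (A : ℂ → E) (hA : ContinuousOn A (sphere 0 1)) {ε : ℝ}
    (hε : 0 < ε) :
    ∃ (M : ℕ) (P : ℂ → E), Differentiable ℂ P ∧
      ∀ ζ ∈ sphere (0 : ℂ) 1, ‖ζ ^ M • A ζ - P ζ‖ < ε := by
  classical
  let b := Module.finBasis ℂ E
  set C : ℝ := ∑ i, ‖b i‖ + 1 with hC
  have hC0 : 0 < C := by positivity
  have hcoord : ∀ i, ∃ (M : ℕ) (P : ℂ → ℂ), Differentiable ℂ P ∧
      ∀ ζ : sphere (0 : ℂ) 1, ‖(ζ : ℂ) ^ M * b.coord i (A ζ) - P ζ‖ < ε / C := fun i =>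
    exists_pow_smul_approx_scalar
      ⟨fun ζ => b.coord i (A ζ), (LinearMap.continuous_of_finiteDimensional (b.coord i)).comp
        (continuousOn_iff_continuous_domRestrict.1 hA)⟩ (by positivity)
  choose M P hP h using hcoord
  refine ⟨∑ i, M i, fun z => ∑ i, (z ^ (∑ j ∈ Finset.univ.erase i, M j) * P i z) • b i,
    by fun_prop, fun ζ hζ => ?_⟩
  have hζ1 : ‖ζ‖ = 1 := by simpa using hζ
  have key : ζ ^ (∑ i, M i) • A ζ - ∑ i, (ζ ^ (∑ j ∈ Finset.univ.erase i, M j) * P i ζ) • b i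
      = ∑ i, (ζ ^ (∑ j ∈ Finset.univ.erase i, M j) *
          (ζ ^ M i * b.coord i (A ζ) - P i ζ)) • b i := by
    conv_lhs => rw [← b.sum_repr (A ζ), Finset.smul_sum, ← Finset.sum_sub_distrib]
    refine Finset.sum_congr rfl fun i _ => ?_
    rw [smul_smul, ← sub_smul, ← Finset.sum_erase_add _ _ (Finset.mem_univ i), pow_add,
      Module.Basis.coord_apply]
    congr 1; ring
  rw [key]
  calc _ ≤ ∑ i, ε / C * ‖b i‖ := by
        refine norm_sum_le_of_le _ fun i _ => ?_
        rw [norm_smul, norm_mul, norm_pow, hζ1, one_pow, one_mul]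
        exact mul_le_mul_of_nonneg_right (h i ⟨ζ, hζ⟩).le (norm_nonneg _)
    _ = ε / C * (C - 1) := by rw [← Finset.mul_sum, hC]; ring
    _ < ε := by
        rw [div_mul_eq_mul_div, div_lt_iff₀ hC0]; nlinarith

end Vector

section Vector
variable {E : Type*} [NormedAddCommGroup E] [NormedSpace ℂ E] [FiniteDimensional ℂ E]

/-- Approximate attachment of the quadratic discs `η ↦ g ζ + η • A₁ ζ + η ^ 2 • A₂ ζ` to the
boundary of the disc `g`. -/
theorem exists_disc_approx_attach (g A₁ A₂ : ℂ → E) {R : ℝ} (hR : 1 < R)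
    (hg : DifferentiableOn ℂ g (ball 0 R)) (hA₁ : ContinuousOn A₁ (sphere 0 1))
    (hA₂ : ContinuousOn A₂ (sphere 0 1)) {ε r : ℝ} (hε : 0 < ε) (hr : r < 1) :
    ∃ g' : ℂ → E, DifferentiableOn ℂ g' (ball 0 R) ∧ g' 0 = g 0 ∧ deriv g' 0 = deriv g 0 ∧
      (∀ ζ ∈ sphere (0 : ℂ) 1, ∃ η : ℂ, ‖η‖ = 1 ∧
        dist (g' ζ) (g ζ + η • A₁ ζ + η ^ 2 • A₂ ζ) < ε) ∧
      ∀ ζ ∈ closedBall (0 : ℂ) 1, dist (g' ζ) (g ζ) < ε ∨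
        (r < ‖ζ‖ ∧ ∃ ξ ∈ sphere (0 : ℂ) 1, dist (g ζ) (g ξ) < ε ∧
          dist (g' ζ) (g ζ) ≤ ‖A₁ ξ‖ + ‖A₂ ξ‖ + ε) := by
  have hε4 : 0 < ε / 4 := by positivity
  obtain ⟨M, P₁, P₂, hP₁, hP₂, h₁, h₂⟩ : ∃ (M : ℕ) (P₁ P₂ : ℂ → E), Differentiable ℂ P₁ ∧
      Differentiable ℂ P₂ ∧ (∀ ζ ∈ sphere (0 : ℂ) 1, ‖ζ ^ M • A₁ ζ - P₁ ζ‖ < ε / 4) ∧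
      ∀ ζ ∈ sphere (0 : ℂ) 1, ‖ζ ^ M • A₂ ζ - P₂ ζ‖ < ε / 4 := by
    obtain ⟨M₁, P₁, hP₁, h₁⟩ := exists_pow_smul_approx A₁ hA₁ hε4
    obtain ⟨M₂, P₂, hP₂, h₂⟩ := exists_pow_smul_approx A₂ hA₂ hε4
    refine ⟨M₁ + M₂, fun z => z ^ M₂ • P₁ z, fun z => z ^ M₁ • P₂ z, by fun_prop, by fun_prop,
      fun ζ hζ => ?_, fun ζ hζ => ?_⟩
    · rw [add_comm, pow_add, mul_smul, ← smul_sub, norm_smul, norm_pow,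
        mem_sphere_zero_iff_norm.1 hζ, one_pow, one_mul]
      exact h₁ ζ hζ
    · rw [pow_add, mul_smul, ← smul_sub, norm_smul, norm_pow,
        mem_sphere_zero_iff_norm.1 hζ, one_pow, one_mul]
      exact h₂ ζ hζ
  have hsub : closedBall (0 : ℂ) 1 ⊆ ball 0 R := closedBall_subset_ball hR
  have hK := isCompact_closedBall (0 : ℂ) 1
  obtain ⟨B₁, hB₁⟩ := hK.exists_bound_of_continuousOn hP₁.continuous.continuousOn
  obtain ⟨B₂, hB₂⟩ := hK.exists_bound_of_continuousOn hP₂.continuous.continuousOn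
  have unif : ∀ F : ℂ → E, ContinuousOn F (closedBall 0 1) → ∃ δ > 0,
      ∀ x ∈ closedBall (0 : ℂ) 1, ∀ y ∈ closedBall (0 : ℂ) 1, dist x y < δ →
        dist (F x) (F y) < ε / 4 := fun F hF =>
    Metric.uniformContinuousOn_iff.1 (hK.uniformContinuousOn_of_continuous hF) _ hε4
  obtain ⟨δ₀, hδ₀, hg0⟩ := unif g (hg.continuousOn.mono hsub)
  obtain ⟨δ₁, hδ₁, hp1⟩ := unif P₁ hP₁.continuous.continuousOn
  obtain ⟨δ₂, hδ₂, hp2⟩ := unif P₂ hP₂.continuous.continuousOn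
  set δ := min δ₀ (min δ₁ δ₂) with hδ
  have hδ0 : 0 < δ := by positivity
  set s : ℝ := max r (max (1 - δ / 2) 0) with hs
  have hs1 : s < 1 := by
    simp only [hs, max_lt_iff]; exact ⟨hr, by linarith, by norm_num⟩
  have hs0 : 0 ≤ s := le_max_of_le_right (le_max_right _ _)
  have hB : 0 ≤ B₁ + B₂ := by
    have := (norm_nonneg _).trans (hB₁ 0 (by simp))
    have := (norm_nonneg _).trans (hB₂ 0 (by simp))
    linarith
  obtain ⟨N, hN⟩ : ∃ N : ℕ, s ^ N * (B₁ + B₂) < ε := by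
    obtain ⟨N, hN⟩ := exists_pow_lt_of_lt_one (show 0 < ε / (B₁ + B₂ + 1) by positivity) hs1
    refine ⟨N, ?_⟩
    rw [lt_div_iff₀ (by positivity)] at hN
    have : 0 ≤ s ^ N := by positivity
    nlinarith
  set Q : ℂ → E := fun z => z ^ N • P₁ z + z ^ (2 * N + 2 + M) • P₂ z with hQ
  have hQd : Differentiable ℂ Q := by fun_prop
  refine ⟨fun z => g z + z ^ 2 • Q z, ?_, by simp, ?_, ?_, ?_⟩
  · exact hg.add (by fun_prop)
  · have hg0 : HasDerivAt g (deriv g 0) 0 :=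
      (hg.differentiableAt (ball_mem_nhds _ (by linarith))).hasDerivAt
    have := hg0.add ((hasDerivAt_pow 2 (0 : ℂ)).smul (hQd 0).hasDerivAt)
    exact this.deriv.trans (by simp)
  · intro ζ hζ
    have hζ1 : ‖ζ‖ = 1 := by simpa using hζ
    refine ⟨ζ ^ (N + 2 + M), by simp [hζ1], ?_⟩
    have : g ζ + ζ ^ 2 • Q ζ - (g ζ + ζ ^ (N + 2 + M) • A₁ ζ + (ζ ^ (N + 2 + M)) ^ 2 • A₂ ζ)
        = -(ζ ^ (N + 2) • (ζ ^ M • A₁ ζ - P₁ ζ)) -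
          ζ ^ (2 * N + 4 + M) • (ζ ^ M • A₂ ζ - P₂ ζ) := by
      simp only [hQ]; module
    rw [dist_eq_norm, this]
    refine (norm_sub_le _ _).trans_lt ?_
    rw [norm_neg, norm_smul, norm_smul, norm_pow, norm_pow, hζ1, one_pow, one_mul, one_pow, one_mul]
    linarith [h₁ ζ hζ, h₂ ζ hζ]
  · intro ζ hζ
    have hζ1 : ‖ζ‖ ≤ 1 := by simpa using hζ
    have hdist : dist (g ζ + ζ ^ 2 • Q ζ) (g ζ) ≤ ‖ζ‖ ^ N * (‖P₁ ζ‖ + ‖P₂ ζ‖) := by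
      rw [dist_eq_norm, add_sub_cancel_left]
      have : ζ ^ 2 • Q ζ = ζ ^ N • (ζ ^ 2 • P₁ ζ + ζ ^ (N + 4 + M) • P₂ ζ) := by
        simp only [hQ]; module
      rw [this, norm_smul, norm_pow]
      gcongr
      refine (norm_add_le _ _).trans ?_
      rw [norm_smul, norm_smul, norm_pow, norm_pow]
      gcongr
      · exact mul_le_of_le_one_left (norm_nonneg _) (pow_le_one₀ (norm_nonneg _) hζ1)
      · exact mul_le_of_le_one_left (norm_nonneg _) (pow_le_one₀ (norm_nonneg _) hζ1)
    rcases le_or_gt ‖ζ‖ s with hle | hgt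
    · left
      refine hdist.trans_lt (lt_of_le_of_lt ?_ hN)
      gcongr
      · exact hB₁ ζ hζ
      · exact hB₂ ζ hζ
    · right
      have hζ0 : 0 < ‖ζ‖ := hs0.trans_lt hgt
      refine ⟨(le_max_left _ _).trans_lt hgt, ((‖ζ‖⁻¹ : ℝ) : ℂ) * ζ, ?_, ?_⟩
      · simp [hζ0.ne']
      set ξ : ℂ := ((‖ζ‖⁻¹ : ℝ) : ℂ) * ζ with hξ
      have hξs : ξ ∈ sphere (0 : ℂ) 1 := by simp [hξ, hζ0.ne']
      have hξb : ξ ∈ closedBall (0 : ℂ) 1 := sphere_subset_closedBall hξs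
      have hd : dist ζ ξ < δ := by
        have : ζ - ξ = ((1 - ‖ζ‖⁻¹ : ℝ) : ℂ) * ζ := by rw [hξ]; push_cast; ring
        rw [dist_eq_norm, this, norm_mul, Complex.norm_real, Real.norm_eq_abs, ← abs_norm ζ,
          ← abs_mul, abs_norm, sub_mul, inv_mul_cancel₀ hζ0.ne', abs_lt]
        have : 1 - δ / 2 < ‖ζ‖ := (le_max_of_le_right (le_max_left _ _)).trans_lt hgt
        constructor <;> linarith
      have d0 := hg0 ζ hζ ξ hξb (hd.trans_le (min_le_left _ _))
      have d1 := hp1 ζ hζ ξ hξb (hd.trans_le ((min_le_right _ _).trans (min_le_left _ _)))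
      have d2 := hp2 ζ hζ ξ hξb (hd.trans_le ((min_le_right _ _).trans (min_le_right _ _)))
      refine ⟨by linarith, hdist.trans ?_⟩
      have hb : ‖ζ‖ ^ N * (‖P₁ ζ‖ + ‖P₂ ζ‖) ≤ ‖P₁ ζ‖ + ‖P₂ ζ‖ :=
        mul_le_of_le_one_left (by positivity) (pow_le_one₀ (norm_nonneg _) hζ1)
      have near : ∀ (P A : ℂ → E), dist (P ζ) (P ξ) < ε / 4 → ‖ξ ^ M • A ξ - P ξ‖ < ε / 4 →
          ‖P ζ‖ ≤ ‖A ξ‖ + ε / 2 := by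
        intro P A hd1 hd2
        have e1 : ‖ξ ^ M • A ξ‖ = ‖A ξ‖ := by
          rw [norm_smul, norm_pow, mem_sphere_zero_iff_norm.1 hξs, one_pow, one_mul]
        have e2 : ‖P ξ‖ ≤ ‖ξ ^ M • A ξ‖ + ‖ξ ^ M • A ξ - P ξ‖ := by
          rw [norm_sub_rev]; exact norm_le_norm_add_norm_sub' _ _
        have e3 : ‖P ζ‖ ≤ ‖P ξ‖ + ‖P ζ - P ξ‖ := norm_le_norm_add_norm_sub' _ _
        rw [← dist_eq_norm] at e3
        linarith
      linarith [near P₁ A₁ d1 (h₁ ξ hξs), near P₂ A₂ d2 (h₂ ξ hξs)]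

end Vector

theorem IsCompact.exists_forall_dist_lt_mem {F : Type*} [NormedAddCommGroup F] {T : Set ℂ} (hT : IsCompact T) {g : ℂ → F} 
    (hg : ContinuousOn g T) {U : Set F} (hU : IsOpen U) (h : ∀ ζ ∈ T, g ζ ∈ U) :
    ∃ δ > 0, ∀ ζ ∈ T, ∀ x, dist x (g ζ) < δ → x ∈ U := by
  obtain ⟨δ, hδ, hsub⟩ := (hT.image_of_continuousOn hg).exists_thickening_subset_open hU
    (Set.image_subset_iff.2 h)
  exact ⟨δ, hδ, fun ζ hζ x hx => hsub (mem_thickening_iff.2 ⟨g ζ, ⟨ζ, hζ, rfl⟩, hx⟩)⟩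

section Vector
variable {E : Type*} [NormedAddCommGroup E] [NormedSpace ℂ E]

/-- The constraints under which the boundary of an analytic disc is to be pushed. -/
structure DiscProblem (E : Type*) [NormedAddCommGroup E] [NormedSpace ℂ E] where
  /-- the space in which discs live -/
  X : Set E
  /-- the region in which the boundaries live -/
  Ω : Set E
  /-- the set to be avoided near the boundary -/
  K : Set E
  /-- the disc to be approximated -/
  f : ℂ → E
  /-- radius on which `f` is approximated -/
  r : ℝ
  /-- quality of the approximation -/
  ε : ℝ
  /-- prescribed derivative at the centre -/
  D : E
  isOpen_X : IsOpen X
  isOpen_Ω : IsOpen Ω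
  subset_X : Ω ⊆ X
  isClosed_K : IsClosed K
  disjoint : K ∩ Ω = ∅
  r_lt_one : r < 1
  continuousOn_f : ContinuousOn f (closedBall 0 r)

namespace DiscProblem

/-- A disc, holomorphic past the closed unit disc, satisfying all constraints. -/
structure Admissible (P : DiscProblem E) (g : ℂ → E) : Prop where
  exists_differentiableOn : ∃ R > 1, DifferentiableOn ℂ g (ball 0 R)
  mem_X : ∀ ζ ∈ closedBall (0 : ℂ) 1, g ζ ∈ P.X
  mem_Ω : ∀ ζ ∈ sphere (0 : ℂ) 1, g ζ ∈ P.Ω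
  dist_lt : ∀ ζ ∈ closedBall (0 : ℂ) P.r, dist (g ζ) (P.f ζ) < P.ε
  notMem_K : ∀ ζ ∈ closedBall (0 : ℂ) 1, P.r ≤ ‖ζ‖ → g ζ ∉ P.K
  apply_zero : g 0 = P.f 0
  deriv_zero : deriv g 0 = P.D

variable {P : DiscProblem E} {g : ℂ → E}

theorem Admissible.continuousOn (hg : P.Admissible g) : ContinuousOn g (closedBall 0 1) := by
  obtain ⟨R, hR, h⟩ := hg.exists_differentiableOn
  exact h.continuousOn.mono (closedBall_subset_ball hR)

theorem Admissible.continuousOn_sphere (hg : P.Admissible g) : ContinuousOn g (sphere 0 1) :=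
  hg.continuousOn.mono sphere_subset_closedBall

/-- Small perturbations of an admissible disc, and large ones inside `Ω` far from the centre, are
admissible. -/
theorem Admissible.exists_stable (hg : P.Admissible g) : ∃ δ > 0, ∀ g' : ℂ → E,
    (∃ R > 1, DifferentiableOn ℂ g' (ball 0 R)) → g' 0 = g 0 → deriv g' 0 = deriv g 0 →
    (∀ ζ ∈ closedBall (0 : ℂ) 1, dist (g' ζ) (g ζ) < δ ∨ (P.r < ‖ζ‖ ∧ g' ζ ∈ P.Ω)) →
    (∀ ζ ∈ sphere (0 : ℂ) 1, g' ζ ∈ P.Ω) → P.Admissible g' := by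
  have hr := P.r_lt_one
  obtain ⟨δ₁, hδ₁, h₁⟩ := (isCompact_closedBall (0 : ℂ) 1).exists_forall_dist_lt_mem
    hg.continuousOn P.isOpen_X hg.mem_X
  obtain ⟨δ₂, hδ₂, h₂⟩ := ((isCompact_closedBall (0 : ℂ) 1).inter_right
    (isClosed_le continuous_const continuous_norm : IsClosed {ζ : ℂ | P.r ≤ ‖ζ‖})
    ).exists_forall_dist_lt_mem (hg.continuousOn.mono Set.inter_subset_left)
    P.isClosed_K.isOpen_compl (fun ζ hζ => hg.notMem_K ζ hζ.1 hζ.2)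
  obtain ⟨δ₃, hδ₃, h₃⟩ : ∃ δ > 0, ∀ ζ ∈ closedBall (0 : ℂ) P.r,
      dist (g ζ) (P.f ζ) + δ ≤ P.ε := by
    rcases (closedBall (0 : ℂ) P.r).eq_empty_or_nonempty with he | hne
    · exact ⟨1, one_pos, by simp [he]⟩
    · obtain ⟨x, hx, hmax⟩ := (isCompact_closedBall (0 : ℂ) P.r).exists_isMaxOn hne
        (f := fun ζ => dist (g ζ) (P.f ζ))
        (continuous_dist.comp_continuousOn
          ((hg.continuousOn.mono (closedBall_subset_closedBall hr.le)).prodMk P.continuousOn_f))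
      refine ⟨P.ε - dist (g x) (P.f x), by linarith [hg.dist_lt x hx], fun ζ hζ => ?_⟩
      have : dist (g ζ) (P.f ζ) ≤ dist (g x) (P.f x) := hmax hζ
      linarith
  refine ⟨min δ₁ (min δ₂ δ₃), by positivity, fun g' hd h0 hd0 hclose hsph => ⟨hd, ?_, hsph, ?_, ?_,
    h0.trans hg.apply_zero, hd0.trans hg.deriv_zero⟩⟩
  · intro ζ hζ
    rcases hclose ζ hζ with h | h
    · exact h₁ ζ hζ _ (h.trans_le (min_le_left _ _))
    · exact P.subset_X h.2
  · intro ζ hζ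
    rcases hclose ζ (closedBall_subset_closedBall hr.le hζ) with h | h
    · have h' := h.trans_le ((min_le_right _ _).trans (min_le_right _ _))
      linarith [dist_triangle (g' ζ) (g ζ) (P.f ζ), h₃ ζ hζ]
    · exact absurd h.1 (not_lt.2 (by simpa using hζ))
  · intro ζ hζ hrζ
    rcases hclose ζ hζ with h | h
    · exact h₂ ζ ⟨hζ, hrζ⟩ _ (h.trans_le ((min_le_right _ _).trans (min_le_left _ _)))
    · exact fun hK => Set.eq_empty_iff_forall_notMem.1 P.disjoint _ ⟨hK, h.2⟩

variable [FiniteDimensional ℂ E]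

/-- If the closed balls `closedBall (g ζ) (φ ζ)` lie in an open set, so do slightly larger ones. -/
theorem _root_.IsCompact.exists_forall_dist_lt_add_mem {T : Set ℂ} (hT : IsCompact T) {g : ℂ → E}
    (hg : ContinuousOn g T) {φ : ℂ → ℝ} (hφ : ContinuousOn φ T) {U : Set E} (hU : IsOpen U)
    (h : ∀ ζ ∈ T, closedBall (g ζ) (φ ζ) ⊆ U) :
    ∃ m > 0, ∀ ζ ∈ T, ∀ x, dist x (g ζ) < φ ζ + m → x ∈ U := by
  have : ProperSpace E := FiniteDimensional.proper ℂ E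
  rcases Uᶜ.eq_empty_or_nonempty with he | hne
  · exact ⟨1, one_pos, fun ζ _ x _ => by rw [Set.compl_empty_iff.1 he]; trivial⟩
  rcases T.eq_empty_or_nonempty with rfl | hTne
  · exact ⟨1, one_pos, by simp⟩
  obtain ⟨x, hx, hmin⟩ := hT.exists_isMinOn hTne
    (((continuous_infDist_pt Uᶜ).comp_continuousOn hg).sub hφ)
  refine ⟨infDist (g x) Uᶜ - φ x, ?_, fun ζ hζ y hy => ?_⟩
  · obtain ⟨y, hy, hd⟩ := hU.isClosed_compl.exists_infDist_eq_dist hne (g x)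
    rw [hd, gt_iff_lt, sub_pos]
    by_contra! hle
    exact hy (h x hx (by rwa [mem_closedBall, dist_comm]))
  · by_contra hyU
    have h1 : infDist (g ζ) Uᶜ ≤ dist (g ζ) y := infDist_le_dist_of_mem hyU
    have h2 : infDist (g x) Uᶜ - φ x ≤ infDist (g ζ) Uᶜ - φ ζ := hmin hζ
    rw [dist_comm] at h1
    linarith

theorem Admissible.exists_attach (hg : P.Admissible g) {A₁ A₂ : ℂ → E}
    (hA₁ : ContinuousOn A₁ (sphere 0 1)) (hA₂ : ContinuousOn A₂ (sphere 0 1))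
    (hΩ : ∀ ζ ∈ sphere (0 : ℂ) 1, closedBall (g ζ) (‖A₁ ζ‖ + ‖A₂ ζ‖) ⊆ P.Ω)
    {ε : ℝ} (hε : 0 < ε) :
    ∃ g', P.Admissible g' ∧ ∀ ζ ∈ sphere (0 : ℂ) 1, ∃ η : ℂ, ‖η‖ = 1 ∧
      dist (g' ζ) (g ζ + η • A₁ ζ + η ^ 2 • A₂ ζ) < ε := by
  obtain ⟨δ, hδ, hstab⟩ := hg.exists_stable
  obtain ⟨m, hm, hmΩ⟩ := (isCompact_sphere (0 : ℂ) 1).exists_forall_dist_lt_add_mem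
    hg.continuousOn_sphere (φ := fun ζ => ‖A₁ ζ‖ + ‖A₂ ζ‖) (hA₁.norm.add hA₂.norm) P.isOpen_Ω hΩ
  obtain ⟨R, hR, hd⟩ := hg.exists_differentiableOn
  obtain ⟨g', hd', h0, hd0, hbd, hin⟩ := exists_disc_approx_attach g A₁ A₂ hR hd hA₁ hA₂
    (show 0 < min ε (min δ (m / 4)) by positivity) P.r_lt_one
  have hmin1 : min ε (min δ (m / 4)) ≤ ε := min_le_left _ _
  have hmin2 : min ε (min δ (m / 4)) ≤ δ := (min_le_right _ _).trans (min_le_left _ _)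
  have hmin3 : min ε (min δ (m / 4)) ≤ m / 4 := (min_le_right _ _).trans (min_le_right _ _)
  refine ⟨g', hstab g' ⟨R, hR, hd'⟩ h0 hd0 (fun ζ hζ => ?_) (fun ζ hζ => ?_), fun ζ hζ => ?_⟩
  · rcases hin ζ hζ with h | ⟨hr, ξ, hξ, h1, h2⟩
    · exact .inl (h.trans_le hmin2)
    · refine .inr ⟨hr, hmΩ ξ hξ _ ?_⟩
      have := dist_triangle (g' ζ) (g ζ) (g ξ)
      linarith
  · obtain ⟨η, hη, h⟩ := hbd ζ hζ
    refine hmΩ ζ hζ _ ?_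
    have h1 := dist_triangle (g' ζ) (g ζ + η • A₁ ζ + η ^ 2 • A₂ ζ) (g ζ)
    have h2 : dist (g ζ + η • A₁ ζ + η ^ 2 • A₂ ζ) (g ζ) ≤ ‖A₁ ζ‖ + ‖A₂ ζ‖ := by
      rw [dist_eq_norm, add_assoc, add_sub_cancel_left]
      refine (norm_add_le _ _).trans ?_
      simp [norm_smul, hη]
    linarith
  · obtain ⟨η, hη, h⟩ := hbd ζ hζ
    exact ⟨η, hη, h.trans_le hmin1⟩

end DiscProblem
end Vector

section Push
variable {E : Type*} [NormedAddCommGroup E] [NormedSpace ℂ E]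

/-- Near `p`, the points of `Ω` can be moved by quadratic discs of size `t` so that `τ` increases by
a fixed multiple of `t ^ 2` along the boundaries of these discs, and `τ` decreases nowhere. -/
def IsLocallyPushable (τ : E → ℝ) (Ω : Set E) (p : E) : Prop :=
  ∃ s > 0, ∃ κ > 0, ∃ t₀ > 0, ∀ t : ℝ, 0 < t → t ≤ t₀ → ∃ a₁ a₂ : E → E,
    ContinuousOn a₁ Ω ∧ ContinuousOn a₂ Ω ∧ ∀ z ∈ Ω, ‖a₁ z‖ + ‖a₂ z‖ ≤ 2 * t ∧
      closedBall z (‖a₁ z‖ + ‖a₂ z‖) ⊆ Ω ∧ ∀ η : ℂ, ‖η‖ = 1 →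
        τ z ≤ τ (z + η • a₁ z + η ^ 2 • a₂ z) ∧
        (z ∈ ball p s → τ z + κ * t ^ 2 ≤ τ (z + η • a₁ z + η ^ 2 • a₂ z))

theorem continuous_cutoff_smul {χ : E → ℝ} (hχ : Continuous χ) {w : E → E} {U C : Set E}
    (hU : IsOpen U) (hC : IsClosed C) (hCU : C ⊆ U) (hχC : ∀ z ∉ C, χ z = 0)
    (hw : ContinuousOn w U) : Continuous fun z => ((χ z : ℝ) : ℂ) • w z := by
  rw [continuous_iff_continuousAt]
  intro z
  by_cases hz : z ∈ U
  · exact (Complex.continuous_ofReal.comp hχ).continuousAt.smul (hw.continuousAt (hU.mem_nhds hz))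
  · have : (fun z => ((χ z : ℝ) : ℂ) • w z) =ᶠ[𝓝 z] fun _ => 0 := by
      filter_upwards [hC.isOpen_compl.mem_nhds (fun h => hz (hCU h))] with y hy
      simp [hχC y hy]
    exact continuousAt_const.congr this.symm

variable [NormedSpace ℝ E] [IsScalarTower ℝ ℂ E]

set_option maxHeartbeats 1000000 in
/-- A continuous function with a lower second order Taylor estimate whose quadratic part is positive
in the mean along a complex line in the kernel of the (nonzero) linear part is pushable. -/
theorem isLocallyPushable_of_taylor_le {τ : E → ℝ} {Ω : Set E} {p : E} {s₀ : ℝ} (hs₀ : 0 < s₀)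
    (hsub : ball p s₀ ⊆ Ω) {L : E → E →L[ℝ] ℝ} (hL : ContinuousOn L (ball p s₀)) (hLp : L p ≠ 0)
    (B : E →L[ℝ] E →L[ℝ] ℝ) {ω : ℝ}
    (hτ : ∀ z v, z ∈ ball p s₀ → z + v ∈ ball p s₀ →
      τ z + L z v + B v v / 2 - ω * ‖v‖ ^ 2 ≤ τ (z + v))
    {w : E} (hw : ‖w‖ = 1) (hw₁ : L p w = 0) (hw₂ : L p (Complex.I • w) = 0) {m : ℝ} (hm : 0 < m)
    (hmB : m = (B w w + B (Complex.I • w) (Complex.I • w)) / 2) (hω : ω ≤ m / 16) :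
    IsLocallyPushable τ Ω p := by
  set Λ : E → E →L[ℂ] ℂ := fun z => StrongDual.extendRCLike (L z) with hΛ
  have hΛv : ∀ z v, Λ z v = ((L z v : ℝ) : ℂ) - Complex.I * (L z (Complex.I • v) : ℝ) :=
    fun z v => by simp [hΛ, StrongDual.extendRCLike_apply]
  have hre : ∀ z v, (Λ z v).re = L z v := fun z v => by simp [hΛv]
  have hpn : p ∈ ball p s₀ := mem_ball_self hs₀
  have hΛcont : ∀ v, ContinuousOn (fun z => Λ z v) (ball p s₀) := by
    intro v
    simp only [hΛv]
    have h1 : ∀ u, ContinuousOn (fun z => ((L z u : ℝ) : ℂ)) (ball p s₀) := fun u =>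
      Complex.continuous_ofReal.comp_continuousOn (hL.clm_apply continuousOn_const)
    exact (h1 v).sub (continuousOn_const.mul (h1 _))
  have hΛpw : Λ p w = 0 := by simp [hΛv, hw₁, hw₂]
  obtain ⟨e, he⟩ : ∃ e, Λ p e ≠ 0 := by
    by_contra! h
    exact hLp (ContinuousLinearMap.ext fun v => by rw [← hre, h v]; simp)
  set q : ℂ := ⟨(B w w - B (Complex.I • w) (Complex.I • w)) / 2,
    -(B w (Complex.I • w) + B (Complex.I • w) w) / 2⟩ with hq
  have hΛat : ∀ v, ContinuousAt (fun z => Λ z v) p := fun v =>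
    (hΛcont v).continuousAt (ball_mem_nhds p hs₀)
  obtain ⟨s₁, hs₁, hs₁0⟩ : ∃ s₁ > 0, ∀ z ∈ ball p s₁, z ∈ ball p s₀ ∧ Λ z e ≠ 0 := by
    have := ((hΛat e).eventually_ne he).and (ball_mem_nhds p hs₀)
    obtain ⟨s, hs, h⟩ := Metric.eventually_nhds_iff_ball.1 this
    exact ⟨s, hs, fun z hz => ⟨(h z hz).2, (h z hz).1⟩⟩
  set W : E → E := fun z => w - (Λ z w / Λ z e) • e with hW
  set c : E → E := fun z => (-(q / 2) / Λ z e) • e with hc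
  have hWc : ContinuousOn W (ball p s₁) := continuousOn_const.sub
    ((((hΛcont w).mono fun z hz => (hs₁0 z hz).1).div
      ((hΛcont e).mono fun z hz => (hs₁0 z hz).1) fun z hz => (hs₁0 z hz).2).smul
      continuousOn_const)
  have hcc : ContinuousOn c (ball p s₁) :=
    (continuousOn_const.div ((hΛcont e).mono fun z hz => (hs₁0 z hz).1)
      fun z hz => (hs₁0 z hz).2).smul continuousOn_const
  have hWp : W p = w := by simp [hW, hΛpw]
  have hΛW : ∀ z ∈ ball p s₁, Λ z (W z) = 0 := fun z hz => by
    have := (hs₁0 z hz).2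
    simp only [hW, map_sub, map_smul, smul_eq_mul]; field_simp; ring
  have hΛc : ∀ z ∈ ball p s₁, Λ z (c z) = -(q / 2) := fun z hz => by
    have := (hs₁0 z hz).2
    simp only [hc, map_smul, smul_eq_mul]; field_simp
  set u : E × ℝ → ℂ → E := fun x η => η • W x.1 + ((x.2 : ℂ) * η ^ 2) • c x.1 with hu
  have hWat : ContinuousAt W p := hWc.continuousAt (ball_mem_nhds p hs₁)
  have hcat : ContinuousAt c p := hcc.continuousAt (ball_mem_nhds p hs₁)
  have hlarge : ∀ᶠ x : E × ℝ in 𝓝 (p, 0), ∀ η ∈ sphere (0 : ℂ) 1,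
      m / 4 < -(η ^ 2 * q).re / 2 + B (u x η) (u x η) / 2 - ω * ‖u x η‖ ^ 2 := by
    refine (isCompact_sphere (0 : ℂ) 1).eventually_forall_of_forall_eventually fun η hη => ?_
    have hη1 : ‖η‖ = 1 := by simpa using hη
    have hη2 : η.re ^ 2 + η.im ^ 2 = 1 := by
      have := Complex.sq_norm η
      rw [hη1, Complex.normSq_apply] at this; nlinarith
    have hcu : ContinuousAt (fun y : (E × ℝ) × ℂ => u y.1 y.2) ((p, 0), η) := by
      have h1 : ContinuousAt (fun y : (E × ℝ) × ℂ => W y.1.1) ((p, 0), η) :=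
        ContinuousAt.comp (g := W) (f := fun y : (E × ℝ) × ℂ => y.1.1) (x := ((p, 0), η)) hWat
          (by fun_prop)
      have h2 : ContinuousAt (fun y : (E × ℝ) × ℂ => c y.1.1) ((p, 0), η) :=
        ContinuousAt.comp (g := c) (f := fun y : (E × ℝ) × ℂ => y.1.1) (x := ((p, 0), η)) hcat
          (by fun_prop)
      exact (continuousAt_snd.smul h1).add (ContinuousAt.smul (by fun_prop) h2)
    have hcG : ContinuousAt (fun y : (E × ℝ) × ℂ => -(y.2 ^ 2 * q).re / 2 +
        B (u y.1 y.2) (u y.1 y.2) / 2 - ω * ‖u y.1 y.2‖ ^ 2) ((p, 0), η) := by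
      have h3 : ContinuousAt (fun y : (E × ℝ) × ℂ => B (u y.1 y.2) (u y.1 y.2)) ((p, 0), η) :=
        ContinuousAt.clm_apply (B.continuous.continuousAt.comp hcu) hcu
      have h4 : ContinuousAt (fun y : (E × ℝ) × ℂ => -(y.2 ^ 2 * q).re / 2) ((p, 0), η) := by
        fun_prop
      exact (h4.add (h3.div_const 2)).sub (continuousAt_const.mul (hcu.norm.pow 2))
    refine hcG.eventually (lt_mem_nhds ?_)
    have hup : u (p, 0) η = η.re • w + η.im • (Complex.I • w) := by
      simp only [hu, hWp, Complex.ofReal_zero, zero_mul, zero_smul, add_zero]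
      conv_lhs => rw [← Complex.re_add_im η]
      rw [add_smul, mul_smul, ← Complex.coe_algebraMap, algebraMap_smul, algebraMap_smul]
    have hnu : ‖u (p, 0) η‖ = 1 := by
      simp only [hu, hWp, Complex.ofReal_zero, zero_mul, zero_smul, add_zero]
      rw [norm_smul, hη1, hw, one_mul]
    have hB : B (u (p, 0) η) (u (p, 0) η) = m + (η ^ 2 * q).re := by
      rw [hup]
      simp only [map_add, map_smul, add_apply, smul_apply,
        smul_eq_mul, pow_two, Complex.mul_re, Complex.mul_im, hq]
      rw [hmB]
      linear_combination (B w w + B (Complex.I • w) (Complex.I • w)) / 2 * hη2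
    show m / 4 < -(η ^ 2 * q).re / 2 + B (u (p, 0) η) (u (p, 0) η) / 2 - ω * ‖u (p, 0) η‖ ^ 2
    rw [hB, hnu]
    linarith
  have hnorm : ∀ᶠ x : E × ℝ in 𝓝 (p, 0), ‖W x.1‖ + |x.2| * ‖c x.1‖ < 2 := by
    have h1 : ContinuousAt (fun y : E × ℝ => W y.1) (p, 0) :=
      ContinuousAt.comp (g := W) (f := fun y : E × ℝ => y.1) (x := (p, 0)) hWat continuousAt_fst
    have h2 : ContinuousAt (fun y : E × ℝ => c y.1) (p, 0) :=
      ContinuousAt.comp (g := c) (f := fun y : E × ℝ => y.1) (x := (p, 0)) hcat continuousAt_fst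
    have h3 : ContinuousAt (fun y : E × ℝ => ‖W y.1‖ + |y.2| * ‖c y.1‖) (p, 0) :=
      h1.norm.add (continuousAt_snd.abs.mul h2.norm)
    refine h3.eventually (gt_mem_nhds ?_)
    simp [hWp, hw]
  obtain ⟨s₂, hs₂, hs₂0⟩ := Metric.eventually_nhds_iff_ball.1 (hlarge.and hnorm)
  set s := min (min s₁ s₂) s₀ / 5 with hs
  have hs0 : 0 < s := by positivity
  have hss₁ : 5 * s ≤ s₁ := by
    have : min (min s₁ s₂) s₀ ≤ s₁ := (min_le_left _ _).trans (min_le_left _ _)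
    rw [hs]; linarith
  have hss₂ : 5 * s ≤ s₂ := by
    have : min (min s₁ s₂) s₀ ≤ s₂ := (min_le_left _ _).trans (min_le_right _ _)
    rw [hs]; linarith
  have hss₀ : 5 * s ≤ s₀ := by
    have : min (min s₁ s₂) s₀ ≤ s₀ := min_le_right _ _
    rw [hs]; linarith
  refine ⟨s, hs0, m / 4, by positivity, s, hs0, fun t ht hts => ?_⟩
  set χ : E → ℝ := fun z => t * max 0 (min 1 (2 - dist z p / s)) with hχ
  have hχc : Continuous χ := by fun_prop
  have hχ0 : ∀ z, 0 ≤ χ z := fun z => by positivity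
  have hχt : ∀ z, χ z ≤ t := fun z => by
    refine mul_le_of_le_one_right ht.le (max_le zero_le_one (min_le_left _ _))
  have hχs : ∀ z ∈ ball p s, χ z = t := fun z hz => by
    have : dist z p / s < 1 := (div_lt_one hs0).2 hz
    simp only [hχ]
    rw [min_eq_left (by linarith), max_eq_right zero_le_one, mul_one]
  have hχC : ∀ z ∉ closedBall p (2 * s), χ z = 0 := fun z hz => by
    have : 2 < dist z p / s := (lt_div_iff₀ hs0).2 (by simpa using hz)
    simp only [hχ]
    rw [max_eq_left ((min_le_right _ _).trans (by linarith)), mul_zero]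
  have hCU : closedBall p (2 * s) ⊆ ball p s₁ := closedBall_subset_ball (by linarith)
  refine ⟨fun z => (χ z : ℂ) • W z, fun z => ((χ z ^ 2 : ℝ) : ℂ) • c z,
    (continuous_cutoff_smul hχc isOpen_ball isClosed_closedBall hCU hχC hWc).continuousOn,
    (continuous_cutoff_smul (hχc.pow 2) isOpen_ball isClosed_closedBall hCU
      (fun z hz => by simp [hχC z hz]) hcc).continuousOn, fun z hz => ?_⟩
  by_cases hzC : z ∈ closedBall p (2 * s)
  swap
  · have hzs : z ∉ ball p s := fun h =>
      hzC (closedBall_subset_closedBall (by linarith) (ball_subset_closedBall h))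
    simp [hχC z hzC, hz, ht.le, hzs]
  have hx : ((z, χ z) : E × ℝ) ∈ ball (p, (0 : ℝ)) s₂ := by
    rw [mem_ball, Prod.dist_eq, max_lt_iff]
    refine ⟨(mem_closedBall.1 hzC).trans_lt (by linarith), ?_⟩
    rw [Real.dist_eq, sub_zero, abs_of_nonneg (hχ0 z)]
    linarith [hχt z]
  obtain ⟨hG, hN⟩ := hs₂0 _ hx
  simp only [abs_of_nonneg (hχ0 z)] at hN
  have hsize : ‖(χ z : ℂ) • W z‖ + ‖((χ z ^ 2 : ℝ) : ℂ) • c z‖ ≤ 2 * χ z := by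
    rw [norm_smul, norm_smul, Complex.norm_real, Complex.norm_real, Real.norm_eq_abs,
      Real.norm_eq_abs, abs_of_nonneg (hχ0 z), abs_of_nonneg (by positivity)]
    nlinarith [hχ0 z]
  have hzp : dist z p ≤ 2 * s := hzC
  refine ⟨hsize.trans (by linarith [hχt z]), fun y hy => hsub ?_, fun η hη => ?_⟩
  · rw [mem_closedBall] at hy
    rw [mem_ball]
    linarith [dist_triangle y z p, hχt z]
  have hv : η • ((χ z : ℂ) • W z) + η ^ 2 • (((χ z ^ 2 : ℝ) : ℂ) • c z)
      = (χ z : ℂ) • u (z, χ z) η := by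
    simp only [hu]; push_cast; module
  have hnv : ‖η • ((χ z : ℂ) • W z) + η ^ 2 • (((χ z ^ 2 : ℝ) : ℂ) • c z)‖ ≤ 2 * χ z := by
    refine (norm_add_le _ _).trans ?_
    rwa [norm_smul η, norm_smul (η ^ 2), norm_pow, hη, one_pow, one_mul, one_mul]
  have hz₁ := hCU hzC
  have hLv : L z (η • ((χ z : ℂ) • W z) + η ^ 2 • (((χ z ^ 2 : ℝ) : ℂ) • c z))
      = χ z ^ 2 * (-(η ^ 2 * q).re / 2) := by
    rw [← hre, map_add, map_smul, map_smul, map_smul, map_smul, hΛW z hz₁, hΛc z hz₁]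
    simp only [smul_eq_mul, mul_zero, zero_add]
    have : η ^ 2 * (((χ z ^ 2 : ℝ) : ℂ) * -(q / 2)) = ((χ z ^ 2 / 2 : ℝ) : ℂ) * -(η ^ 2 * q) := by
      push_cast; ring
    rw [this, Complex.re_ofReal_mul, Complex.neg_re]
    ring
  have key := hτ z (η • ((χ z : ℂ) • W z) + η ^ 2 • (((χ z ^ 2 : ℝ) : ℂ) • c z))
    (hs₁0 z hz₁).1 (by
      rw [mem_ball]
      have := dist_triangle (z + (η • ((χ z : ℂ) • W z) + η ^ 2 • (((χ z ^ 2 : ℝ) : ℂ) • c z))) z p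
      rw [dist_self_add_left] at this
      linarith [hχt z])
  have hcast : ∀ x : E, (χ z : ℂ) • x = χ z • x := fun x => by
    rw [← Complex.coe_algebraMap, algebraMap_smul]
  rw [hLv, hv, hcast, norm_smul, map_smul, map_smul, smul_apply, Real.norm_eq_abs,
    mul_pow |χ z|, sq_abs, smul_eq_mul, smul_eq_mul, ← hcast, ← hv, ← add_assoc z] at key
  have hgain : τ z + m / 4 * χ z ^ 2 ≤ τ (z + η • ((χ z : ℂ) • W z) +
      η ^ 2 • (((χ z ^ 2 : ℝ) : ℂ) • c z)) := by
    have := hG η (by simpa using hη)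
    nlinarith [sq_nonneg (χ z)]
  refine ⟨by nlinarith [sq_nonneg (χ z)], fun hzs => ?_⟩
  refine le_trans (le_of_eq ?_) hgain
  rw [hχs z hzs]

end Push

section Push
variable {E : Type*} [NormedAddCommGroup E] [NormedSpace ℂ E] [FiniteDimensional ℂ E]

namespace DiscProblem
variable {P : DiscProblem E} {g : ℂ → E}

theorem Admissible.exists_attach_of_continuousOn (hg : P.Admissible g) {A₁ A₂ : ℂ → E}
    (hA₁ : ContinuousOn A₁ (sphere 0 1)) (hA₂ : ContinuousOn A₂ (sphere 0 1))
    (hΩ : ∀ ζ ∈ sphere (0 : ℂ) 1, closedBall (g ζ) (‖A₁ ζ‖ + ‖A₂ ζ‖) ⊆ P.Ω)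
    {τ : E → ℝ} (hτ : ContinuousOn τ P.Ω) {ε : ℝ} (hε : 0 < ε) :
    ∃ g', P.Admissible g' ∧ ∀ ζ ∈ sphere (0 : ℂ) 1, ∃ η : ℂ, ‖η‖ = 1 ∧
      dist (g' ζ) (g ζ + η • A₁ ζ + η ^ 2 • A₂ ζ) < ε ∧
      τ (g ζ + η • A₁ ζ + η ^ 2 • A₂ ζ) - ε < τ (g' ζ) := by
  set Φ : ℂ × ℂ → E := fun x => g x.1 + x.2 • A₁ x.1 + x.2 ^ 2 • A₂ x.1 with hΦ
  have hcomp : ∀ {A : ℂ → E}, ContinuousOn A (sphere 0 1) →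
      ContinuousOn (fun x : ℂ × ℂ => A x.1) (sphere 0 1 ×ˢ sphere 0 1) := fun hA =>
    hA.comp continuousOn_fst fun x hx => hx.1
  have hΦc : ContinuousOn Φ (sphere 0 1 ×ˢ sphere 0 1) :=
    ((hcomp hg.continuousOn_sphere).add (continuousOn_snd.smul (hcomp hA₁))).add
      ((continuousOn_snd.pow 2).smul (hcomp hA₂))
  have hΦΩ : ∀ x ∈ (sphere 0 1 ×ˢ sphere 0 1 : Set (ℂ × ℂ)), Φ x ∈ P.Ω := fun x hx => by
    refine hΩ x.1 hx.1 ?_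
    have h2 : ‖x.2‖ = 1 := by simpa using hx.2
    rw [mem_closedBall, dist_eq_norm, hΦ]
    simp only
    rw [add_assoc, add_sub_cancel_left]
    refine (norm_add_le _ _).trans ?_
    simp [norm_smul, h2]
  have hcpt : IsCompact (Φ '' (sphere 0 1 ×ˢ sphere 0 1)) :=
    ((isCompact_sphere 0 1).prod (isCompact_sphere 0 1)).image_of_continuousOn hΦc
  have hunif := hcpt.uniformContinuousAt_of_continuousAt τ
    (by
      rintro _ ⟨x, hx, rfl⟩
      exact hτ.continuousAt (P.isOpen_Ω.mem_nhds (hΦΩ x hx))) (Metric.dist_mem_uniformity hε)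
  obtain ⟨δ, hδ, hδτ⟩ := Metric.mem_uniformity_dist.1 hunif
  obtain ⟨g', hg', h⟩ := hg.exists_attach hA₁ hA₂ hΩ (lt_min hε hδ)
  refine ⟨g', hg', fun ζ hζ => ?_⟩
  obtain ⟨η, hη, hd⟩ := h ζ hζ
  refine ⟨η, hη, hd.trans_le (min_le_left _ _), ?_⟩
  have h1 : Φ (ζ, η) ∈ Φ '' (sphere 0 1 ×ˢ sphere 0 1) :=
    ⟨(ζ, η), ⟨hζ, by simpa using hη⟩, rfl⟩
  have h2 : dist (Φ (ζ, η)) (g' ζ) < δ := by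
    rw [dist_comm]; exact hd.trans_le (min_le_right _ _)
  have h3 : dist (τ (Φ (ζ, η))) (τ (g' ζ)) < ε := hδτ h2 h1
  rw [Real.dist_eq, abs_lt] at h3
  simp only [hΦ] at h3
  linarith [h3.2]

/-- One round of pushing near a compact set of pushable points. -/
theorem exists_push_round {Ω : Set E} {τ : E → ℝ} (hτ : ContinuousOn τ Ω) {M : Set E}
    (hM : IsCompact M) (hpush : ∀ p ∈ M, IsLocallyPushable τ Ω p) {d : ℝ} (hd : 0 < d) :
    ∃ δ > 0, ∃ W : Set E, IsOpen W ∧ M ⊆ W ∧ ∀ (P : DiscProblem E) (g : ℂ → E), P.Ω = Ω →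
      P.Admissible g → ∀ ε > 0, ∃ g', P.Admissible g' ∧ ∀ ζ ∈ sphere (0 : ℂ) 1,
        dist (g' ζ) (g ζ) ≤ d ∧ τ (g ζ) - ε ≤ τ (g' ζ) ∧
          (g ζ ∈ W → τ (g ζ) + δ ≤ τ (g' ζ)) := by
  classical
  choose! s hs κ hκ t₀ ht₀ hp using hpush
  obtain ⟨I, hIM, hIcov⟩ := hM.elim_nhds_subcover (fun p => ball p (s p / 2))
    (fun p hpM => ball_mem_nhds p (half_pos (hs p hpM)))
  obtain ⟨t, ht0, htd, ht⟩ : ∃ t > 0, (I.card : ℝ) * (3 * t) ≤ d ∧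
      ∀ p ∈ I, t ≤ t₀ p ∧ (I.card : ℝ) * (3 * t) ≤ s p / 2 := by
    have small : ∀ c > 0, ∀ᶠ t : ℝ in 𝓝[>] 0, (I.card : ℝ) * (3 * t) ≤ c := fun c hc => by
      have : Tendsto (fun t : ℝ => (I.card : ℝ) * (3 * t)) (𝓝[>] 0) (𝓝 0) := by
        refine tendsto_nhdsWithin_of_tendsto_nhds ?_
        have : Continuous fun t : ℝ => (I.card : ℝ) * (3 * t) := by fun_prop
        simpa using this.tendsto 0
      exact this.eventually (ge_mem_nhds hc)
    have hall : ∀ᶠ t : ℝ in 𝓝[>] 0, ∀ p ∈ I, t ≤ t₀ p ∧ (I.card : ℝ) * (3 * t) ≤ s p / 2 :=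
      (Filter.eventually_all_finset I).2 fun p hpI =>
        (eventually_nhdsWithin_of_eventually_nhds (ge_mem_nhds (ht₀ p (hIM p hpI)))).and
          (small _ (half_pos (hs p (hIM p hpI))))
    obtain ⟨t, ht⟩ := (eventually_mem_nhdsWithin.and ((small d hd).and hall)).exists
    exact ⟨t, ht.1, ht.2.1, ht.2.2⟩
  obtain ⟨δ, hδ, hδκ⟩ : ∃ δ > 0, ∀ p ∈ I, 2 * δ ≤ κ p * t ^ 2 := by
    have hall : ∀ᶠ δ : ℝ in 𝓝[>] 0, ∀ p ∈ I, 2 * δ ≤ κ p * t ^ 2 :=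
      (Filter.eventually_all_finset I).2 fun p hpI => by
        have hpos : 0 < κ p * t ^ 2 / 2 := by
          have := hκ p (hIM p hpI)
          have : 0 < t := ht0
          positivity
        filter_upwards [eventually_nhdsWithin_of_eventually_nhds (ge_mem_nhds hpos)] with x hx
        linarith
    obtain ⟨δ, h⟩ := (eventually_mem_nhdsWithin.and hall).exists
    exact ⟨δ, h.1, h.2⟩
  refine ⟨δ, hδ, ⋃ p ∈ I, ball p (s p / 2), isOpen_biUnion fun _ _ => isOpen_ball, hIcov,
    fun P g hPΩ hg ε hε => ?_⟩
  subst hPΩ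
  have partialRound : ∀ J : Finset E, J ⊆ I → ∀ ε > 0, ∃ g', P.Admissible g' ∧
      ∀ ζ ∈ sphere (0 : ℂ) 1, dist (g' ζ) (g ζ) ≤ J.card * (3 * t) ∧ τ (g ζ) - ε ≤ τ (g' ζ) ∧
        ∀ p ∈ J, g ζ ∈ ball p (s p / 2) → τ (g ζ) + 2 * δ - ε ≤ τ (g' ζ) := by
    intro J
    induction J using Finset.induction_on with
    | empty => exact fun _ ε hε => ⟨g, hg, fun ζ _ => by simp [hε.le]⟩
    | insert p J hpJ ih =>
      intro hJI ε hε
      obtain ⟨g₁, hg₁, h₁⟩ := ih (fun x hx => hJI (Finset.mem_insert_of_mem hx)) (ε / 2)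
        (half_pos hε)
      have hpI : p ∈ I := hJI (Finset.mem_insert_self p J)
      obtain ⟨a₁, a₂, ha₁, ha₂, ha⟩ := hp p (hIM p hpI) t ht0 (ht p hpI).1
      have hcomp : ∀ {a : E → E}, ContinuousOn a P.Ω → ContinuousOn (fun ζ => a (g₁ ζ))
          (sphere 0 1) := fun h => h.comp hg₁.continuousOn_sphere hg₁.mem_Ω
      obtain ⟨g₂, hg₂, h₂⟩ := hg₁.exists_attach_of_continuousOn (hcomp ha₁) (hcomp ha₂)
        (fun ζ hζ => (ha _ (hg₁.mem_Ω ζ hζ)).2.1) hτ (lt_min ht0 (half_pos hε))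
      refine ⟨g₂, hg₂, fun ζ hζ => ?_⟩
      obtain ⟨η, hη, hd₂, hτ₂⟩ := h₂ ζ hζ
      obtain ⟨hd₁, hτ₁, hgain₁⟩ := h₁ ζ hζ
      obtain ⟨hsize, -, hpushη⟩ := ha _ (hg₁.mem_Ω ζ hζ)
      obtain ⟨hmono, hgain⟩ := hpushη η hη
      have hm1 : min t (ε / 2) ≤ t := min_le_left _ _
      have hm2 : min t (ε / 2) ≤ ε / 2 := min_le_right _ _
      have hΦ : dist (g₁ ζ + η • a₁ (g₁ ζ) + η ^ 2 • a₂ (g₁ ζ)) (g₁ ζ) ≤ 2 * t := by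
        rw [dist_eq_norm, add_assoc, add_sub_cancel_left]
        refine (norm_add_le _ _).trans ?_
        rwa [norm_smul, norm_smul, norm_pow, hη, one_pow, one_mul, one_mul]
      refine ⟨?_, by linarith, fun p' hp' hgp' => ?_⟩
      · rw [Finset.card_insert_of_notMem hpJ]
        push_cast
        linarith [dist_triangle (g₂ ζ) (g₁ ζ + η • a₁ (g₁ ζ) + η ^ 2 • a₂ (g₁ ζ)) (g₁ ζ),
          dist_triangle (g₂ ζ) (g₁ ζ) (g ζ)]
      · rcases Finset.mem_insert.1 hp' with rfl | hp'J
        · have hcard : (J.card : ℝ) ≤ I.card := by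
            exact_mod_cast Finset.card_le_card fun x hx => hJI (Finset.mem_insert_of_mem hx)
          have hball : g₁ ζ ∈ ball p' (s p') := by
            rw [mem_ball] at hgp' ⊢
            have := (ht p' hpI).2
            have : (J.card : ℝ) * (3 * t) ≤ I.card * (3 * t) :=
              mul_le_mul_of_nonneg_right hcard (by linarith)
            linarith [dist_triangle (g₁ ζ) (g ζ) p']
          linarith [hgain hball, hδκ p' hpI]
        · linarith [hgain₁ p' hp'J hgp']
  obtain ⟨g', hg', h⟩ := partialRound I subset_rfl (min ε δ) (lt_min hε hδ)
  have hm1 : min ε δ ≤ ε := min_le_left _ _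
  have hm2 : min ε δ ≤ δ := min_le_right _ _
  refine ⟨g', hg', fun ζ hζ => ⟨(h ζ hζ).1.trans htd, by linarith [(h ζ hζ).2.1], fun hW => ?_⟩⟩
  obtain ⟨p, hpI, hpb⟩ := Set.mem_iUnion₂.1 hW
  linarith [(h ζ hζ).2.2 p hpI hpb]

/-- Pushing the boundary of a disc across a compact layer of pushable points. -/
theorem Admissible.exists_push_level (hg : P.Admissible g) {τ : E → ℝ} (hτ : ContinuousOn τ P.Ω)
    {c₀ c₁ : ℝ} (hL : IsCompact {z ∈ P.Ω | c₀ ≤ τ z ∧ τ z ≤ c₁})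
    (hpush : ∀ p ∈ P.Ω, c₀ ≤ τ p → τ p ≤ c₁ → IsLocallyPushable τ P.Ω p)
    (hbd : ∀ ζ ∈ sphere (0 : ℂ) 1, c₀ < τ (g ζ)) :
    ∃ g', P.Admissible g' ∧ ∀ ζ ∈ sphere (0 : ℂ) 1, c₁ < τ (g' ζ) := by
  obtain ⟨δ, hδ, W, hW, hLW, hround⟩ := exists_push_round hτ hL
    (fun p hp => hpush p hp.1 hp.2.1 hp.2.2) one_pos
  obtain ⟨c, hc, hcg⟩ : ∃ c > c₀, ∀ ζ ∈ sphere (0 : ℂ) 1, c ≤ τ (g ζ) := by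
    obtain ⟨x, hx, hmin⟩ := (isCompact_sphere (0 : ℂ) 1).exists_isMinOn ⟨1, by simp⟩
      (hτ.comp hg.continuousOn_sphere hg.mem_Ω)
    exact ⟨τ (g x), hbd x hx, fun ζ hζ => hmin hζ⟩
  have hiter : ∀ k : ℕ, ∃ g', P.Admissible g' ∧ ∀ ζ ∈ sphere (0 : ℂ) 1,
      c₁ < τ (g' ζ) ∨ c + k * (δ / 2) ≤ τ (g' ζ) := by
    intro k
    induction k with
    | zero => exact ⟨g, hg, fun ζ hζ => .inr (by simpa using hcg ζ hζ)⟩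
    | succ k ih =>
      obtain ⟨g₁, hg₁, h₁⟩ := ih
      have hck : c₀ < c + k * (δ / 2) := by
        have : 0 ≤ (k : ℝ) * (δ / 2) := by positivity
        linarith
      have hnW : ∀ ζ ∈ sphere (0 : ℂ) 1, g₁ ζ ∉ W → c₁ < τ (g₁ ζ) := fun ζ hζ hζW => by
        by_contra! hle
        rcases h₁ ζ hζ with h | h
        · linarith
        · exact hζW (hLW ⟨hg₁.mem_Ω ζ hζ, by linarith, hle⟩)
      obtain ⟨m, hm, hmτ⟩ : ∃ m > 0, ∀ ζ ∈ sphere (0 : ℂ) 1, g₁ ζ ∉ W → c₁ + m ≤ τ (g₁ ζ) := by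
        have hcpt : IsCompact (g₁ '' sphere 0 1 \ W) :=
          ((isCompact_sphere (0 : ℂ) 1).image_of_continuousOn hg₁.continuousOn_sphere).diff hW
        rcases (g₁ '' sphere 0 1 \ W).eq_empty_or_nonempty with he | hne
        · refine ⟨1, one_pos, fun ζ hζ hζW => ?_⟩
          exact absurd (show g₁ ζ ∈ g₁ '' sphere 0 1 \ W from ⟨⟨ζ, hζ, rfl⟩, hζW⟩) (by simp [he])
        · obtain ⟨x, ⟨⟨ξ, hξ, rfl⟩, hξW⟩, hmin⟩ := hcpt.exists_isMinOn hne
            (hτ.mono (by rintro _ ⟨⟨ξ, hξ, rfl⟩, -⟩; exact hg₁.mem_Ω ξ hξ))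
          refine ⟨τ (g₁ ξ) - c₁, by linarith [hnW ξ hξ hξW], fun ζ hζ hζW => ?_⟩
          have : τ (g₁ ξ) ≤ τ (g₁ ζ) := hmin ⟨⟨ζ, hζ, rfl⟩, hζW⟩
          linarith
      obtain ⟨g₂, hg₂, h₂⟩ := hround P g₁ rfl hg₁ (m / 2) (half_pos hm)
      refine ⟨g₂, hg₂, fun ζ hζ => ?_⟩
      obtain ⟨-, h3, h4⟩ := h₂ ζ hζ
      by_cases hζW : g₁ ζ ∈ W
      · rcases h₁ ζ hζ with h | h
        · exact .inl (by linarith [h4 hζW])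
        · right
          push_cast
          linarith [h4 hζW]
      · exact .inl (by linarith [hmτ ζ hζ hζW])
  obtain ⟨k, hk⟩ := exists_nat_gt ((c₁ - c) / (δ / 2))
  obtain ⟨g', hg', h⟩ := hiter k
  refine ⟨g', hg', fun ζ hζ => ?_⟩
  rw [div_lt_iff₀ (half_pos hδ)] at hk
  rcases h ζ hζ with h | h
  · exact h
  · linarith

end DiscProblem
end Push

section Taylor

/-- Second order Taylor estimate, uniform in the base point. -/
theorem exists_ball_taylor_le {E : Type*} [NormedAddCommGroup E] [NormedSpace ℝ E] {ρ : E → ℝ}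
    {Ω : Set E} (hΩ : IsOpen Ω) (hρ : ContDiffOn ℝ 2 ρ Ω) {p : E} (hp : p ∈ Ω) {ω : ℝ}
    (hω : 0 < ω) :
    ∃ s > 0, ball p s ⊆ Ω ∧ ∀ z v, z ∈ ball p s → z + v ∈ ball p s →
      |ρ (z + v) - (ρ z + fderiv ℝ ρ z v + fderiv ℝ (fderiv ℝ ρ) p v v / 2)| ≤ ω * ‖v‖ ^ 2 := by
  have hstrict : HasStrictFDerivAt (fderiv ℝ ρ) (fderiv ℝ (fderiv ℝ ρ) p) p :=
    ((hρ.fderiv_of_isOpen (m := 1) hΩ (by norm_num)).contDiffAt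
      (hΩ.mem_nhds hp)).hasStrictFDerivAt one_ne_zero
  have hev : ∀ᶠ x : E × E in 𝓝 (p, p), ‖fderiv ℝ ρ x.1 - fderiv ℝ ρ x.2 -
      fderiv ℝ (fderiv ℝ ρ) p (x.1 - x.2)‖ ≤ ω * ‖x.1 - x.2‖ := hstrict.isLittleO.def hω
  have hev₂ : ∀ᶠ x : E × E in 𝓝 (p, p), x.1 ∈ Ω :=
    continuousAt_fst.eventually (hΩ.mem_nhds hp)
  obtain ⟨s, hs, hball⟩ := Metric.eventually_nhds_iff_ball.1 (hev.and hev₂)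
  have hmem : ∀ x ∈ ball p s, ∀ y ∈ ball p s, (x, y) ∈ ball (p, p) s := fun x hx y hy => by
    rw [← ball_prod_same]; exact ⟨hx, hy⟩
  have hsub : ball p s ⊆ Ω := fun x hx => (hball _ (hmem x hx x hx)).2
  refine ⟨s, hs, hsub, fun z v hz hzv => ?_⟩
  have hseg : ∀ t ∈ Set.Icc (0 : ℝ) 1, z + t • v ∈ ball p s := fun t ht => by
    have := (convex_ball p s).add_smul_sub_mem hz hzv ht
    rwa [add_sub_cancel_left] at this
  set B := fderiv ℝ (fderiv ℝ ρ) p with hB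
  have hderiv : ∀ t ∈ Set.Icc (0 : ℝ) 1, HasDerivWithinAt
      (fun t : ℝ => ρ (z + t • v) - t * fderiv ℝ ρ z v - t ^ 2 * (B v v / 2))
      (fderiv ℝ ρ (z + t • v) v - fderiv ℝ ρ z v - t * B v v) (Set.Icc 0 1) t := fun t ht => by
    have h1 : HasFDerivAt ρ (fderiv ℝ ρ (z + t • v)) (z + t • v) :=
      ((hρ.differentiableOn (by norm_num)).differentiableAt
        (hΩ.mem_nhds (hsub (hseg t ht)))).hasFDerivAt
    have h2 : HasDerivAt (fun t : ℝ => z + t • v) v t := by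
      simpa using ((hasDerivAt_id t).smul_const v).const_add z
    have h3 := (h1.comp_hasDerivAt t h2).sub ((hasDerivAt_id t).mul_const (fderiv ℝ ρ z v))
    have h4 := (h3.sub ((hasDerivAt_pow 2 t).mul_const (B v v / 2))).hasDerivWithinAt
      (s := Set.Icc 0 1)
    refine h4.congr_deriv ?_
    simp; ring
  have hbound : ∀ t ∈ Set.Ico (0 : ℝ) 1,
      ‖fderiv ℝ ρ (z + t • v) v - fderiv ℝ ρ z v - t * B v v‖ ≤ ω * ‖v‖ ^ 2 := fun t ht => by
    have h1 := (hball _ (hmem _ (hseg t ⟨ht.1, ht.2.le⟩) z hz)).1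
    simp only [add_sub_cancel_left] at h1
    have h2 : fderiv ℝ ρ (z + t • v) v - fderiv ℝ ρ z v - t * B v v =
        (fderiv ℝ ρ (z + t • v) - fderiv ℝ ρ z - B (t • v)) v := by
      simp
    rw [h2]
    refine (ContinuousLinearMap.le_opNorm _ _).trans ?_
    rw [pow_two, ← mul_assoc]
    refine mul_le_mul_of_nonneg_right (h1.trans ?_) (norm_nonneg v)
    rw [norm_smul, Real.norm_eq_abs, abs_of_nonneg ht.1]
    have : t * ‖v‖ ≤ 1 * ‖v‖ := mul_le_mul_of_nonneg_right ht.2.le (norm_nonneg v)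
    rw [one_mul] at this
    exact mul_le_mul_of_nonneg_left this hω.le
  have := norm_image_sub_le_of_norm_deriv_le_segment_01' hderiv hbound
  rw [Real.norm_eq_abs] at this
  convert this using 2
  simp; ring

end Taylor

section Push
variable {E : Type*} [NormedAddCommGroup E] [NormedSpace ℂ E] [NormedSpace ℝ E]
  [IsScalarTower ℝ ℂ E]

/-- If the Levi form of `ρ` at `p` has two positive eigenvalues and `h` is convex, then `ρ + h` is
pushable at `p`, provided `p` is not critical. -/
theorem isLocallyPushable_add_convex {ρ : E → ℝ} {Ω : Set E} (hΩ : IsOpen Ω)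
    (hρ : ContDiffOn ℝ 2 ρ Ω) {p : E} (hp : p ∈ Ω) {V : Submodule ℂ E}
    (hV : Module.finrank ℂ V = 2) (hpos : ∀ w ∈ V, w ≠ 0 →
      0 < fderiv ℝ (fderiv ℝ ρ) p w w +
        fderiv ℝ (fderiv ℝ ρ) p (Complex.I • w) (Complex.I • w))
    {h : E → ℝ} {L : E → E →L[ℝ] ℝ} (hL : Continuous L) (hconv : ∀ z v, h z + L z v ≤ h (z + v))
    (hne : fderiv ℝ ρ p + L p ≠ 0) :
    IsLocallyPushable (fun z => ρ z + h z) Ω p := by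
  obtain ⟨w, hwV, hw, hker⟩ : ∃ w ∈ V, ‖w‖ = 1 ∧
      StrongDual.extendRCLike (𝕜 := ℂ) (fderiv ℝ ρ p + L p) w = 0 := by
    set Λ := StrongDual.extendRCLike (𝕜 := ℂ) (fderiv ℝ ρ p + L p)
    have : FiniteDimensional ℂ V := Module.finite_of_finrank_pos (by omega)
    have hk := LinearMap.ker_ne_bot_of_finrank_lt (f := (Λ : E →ₗ[ℂ] ℂ).domRestrict V)
      (by rw [hV, Module.finrank_self]; norm_num)
    obtain ⟨⟨x, hxV⟩, hx, hx0⟩ := (Submodule.ne_bot_iff _).1 hk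
    have hx0' : x ≠ 0 := fun h => hx0 (by simp [h])
    have hxk : Λ x = 0 := hx
    refine ⟨((‖x‖⁻¹ : ℝ) : ℂ) • x, V.smul_mem _ hxV, ?_, by simp [hxk]⟩
    rw [norm_smul, Complex.norm_real, norm_inv, norm_norm, inv_mul_cancel₀ (norm_ne_zero_iff.2 hx0')]
  have hker' : ∀ c : ℂ, (fderiv ℝ ρ p + L p) (c • w) = 0 := fun c => by
    have := StrongDual.re_extendRCLike_apply (𝕜 := ℂ) (fderiv ℝ ρ p + L p) (c • w)
    rw [← this, map_smul, hker]; simp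
  have hw0 : w ≠ 0 := fun h => by simp [h] at hw
  have hm := hpos w hwV hw0
  set B := fderiv ℝ (fderiv ℝ ρ) p
  set m := (B w w + B (Complex.I • w) (Complex.I • w)) / 2 with hmdef
  have hm0 : 0 < m := half_pos hm
  obtain ⟨s, hs, hsub, htaylor⟩ := exists_ball_taylor_le hΩ hρ hp (show 0 < m / 16 by positivity)
  refine isLocallyPushable_of_taylor_le (τ := fun z => ρ z + h z) (L := fun z => fderiv ℝ ρ z + L z)
    hs hsub ?_ hne B (ω := m / 16) (fun z v hz hzv => ?_) hw (by simpa using hker' 1)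
    (hker' Complex.I) hm0 hmdef le_rfl
  · exact ((hρ.continuousOn_fderiv_of_isOpen hΩ (by norm_num)).mono hsub).add hL.continuousOn
  · have h1 := (abs_le.1 (htaylor z v hz hzv)).1
    have h2 := hconv z v
    rw [add_apply]
    linarith

end Push

section Bilinear
variable {E : Type*} [NormedAddCommGroup E] [NormedSpace ℂ E] [NormedSpace ℝ E]
  [IsScalarTower ℝ ℂ E]

theorem complex_smul_eq_real_smul_add (η : ℂ) (v : E) : η • v = η.re • v + η.im • Complex.I • v := by
  conv_lhs => rw [← Complex.re_add_im η]
  rw [add_smul, mul_smul, ← Complex.coe_algebraMap, algebraMap_smul, algebraMap_smul]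

/-- A real bilinear form whose Levi form is positive on a complex plane has an isotropic vector for
its `(2,0)` part in that plane. -/
theorem exists_isotropic {B : E →L[ℝ] E →L[ℝ] ℝ} (hB : ∀ u v, B u v = B v u)
    {V : Submodule ℂ E} (hV : Module.finrank ℂ V = 2) :
    ∃ w ∈ V, w ≠ 0 ∧ B (Complex.I • w) (Complex.I • w) = B w w ∧ B w (Complex.I • w) = 0 := by
  have : FiniteDimensional ℂ V := Module.finite_of_finrank_pos (by omega)
  let b := Module.finBasisOfFinrankEq ℂ V hV
  set v₁ : E := ((b 0 : V) : E)
  set v₂ : E := ((b 1 : V) : E)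
  have hli : LinearIndependent ℂ ![v₁, v₂] := by
    have := b.linearIndependent.map' V.subtype (Submodule.ker_subtype V)
    have h : ![v₁, v₂] = V.subtype ∘ b := by
      ext i; fin_cases i <;> rfl
    rwa [h]
  have hv₁ : v₁ ≠ 0 := hli.ne_zero 0
  set q : E → ℂ := fun v => ⟨B v v - B (Complex.I • v) (Complex.I • v), -2 * B v (Complex.I • v)⟩
    with hq
  suffices h : ∃ w ∈ V, w ≠ 0 ∧ q w = 0 by
    obtain ⟨w, hw, hw0, hqw⟩ := h
    have h1 := congrArg Complex.re hqw
    have h2 := congrArg Complex.im hqw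
    simp only [hq, Complex.zero_re, Complex.zero_im] at h1 h2
    exact ⟨w, hw, hw0, by linarith, by linarith⟩
  by_cases hq₁ : q v₁ = 0
  · exact ⟨v₁, (b 0).2, hv₁, hq₁⟩
  set s : ℂ := ⟨B v₁ v₂ - B (Complex.I • v₁) (Complex.I • v₂),
    -(B v₁ (Complex.I • v₂) + B (Complex.I • v₁) v₂)⟩ with hs
  have hII : ∀ v : E, Complex.I • Complex.I • v = -v := fun v => by
    rw [smul_smul, Complex.I_mul_I, neg_one_smul]
  have hcomm : ∀ (a : ℝ) (v : E), Complex.I • a • v = a • Complex.I • v := fun a v =>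
    smul_comm _ _ _
  have hexp : ∀ x : ℂ, q (x • v₁ + v₂) = q v₁ * (x * x) + 2 * s * x + q v₂ := fun x => by
    rw [complex_smul_eq_real_smul_add x v₁]
    have e1 := hB (Complex.I • v₁) v₁
    have e2 := hB v₂ v₁
    have e3 := hB v₂ (Complex.I • v₁)
    have e4 := hB (Complex.I • v₂) v₁
    have e5 := hB (Complex.I • v₂) (Complex.I • v₁)
    simp only [hq, hs, smul_add, hcomm, hII]
    apply Complex.ext
    · simp only [map_add, map_smul, map_neg, add_apply, smul_apply, neg_apply, smul_eq_mul,
        Complex.add_re, Complex.mul_re, Complex.mul_im, Complex.re_ofNat, Complex.im_ofNat, e1, e2,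
        e3, e4, e5, smul_neg]
      ring
    · simp only [map_add, map_smul, map_neg, add_apply, smul_apply, smul_eq_mul,
        Complex.add_im, Complex.mul_re, Complex.mul_im, Complex.re_ofNat, Complex.im_ofNat, e1, e2,
        e3, smul_neg]
      ring
  obtain ⟨x, hx⟩ := exists_quadratic_eq_zero hq₁ (IsAlgClosed.exists_eq_mul_self
    (discrim (q v₁) (2 * s) (q v₂)))
  refine ⟨x • v₁ + v₂, V.add_mem (V.smul_mem _ (b 0).2) (b 1).2, fun h0 => ?_, by rw [hexp, hx]⟩
  have := LinearIndependent.pair_iff.1 hli x 1 (by simpa using h0)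
  exact one_ne_zero this.2

/-- Two `B`-orthogonal positive directions such that the pair of functionals `B p₁, B p₂`, viewed as a
map to `ℂ`, restricts to the identity on one complex line and to conjugation on another one. -/
theorem exists_orthogonal_pair {B : E →L[ℝ] E →L[ℝ] ℝ} (hB : ∀ u v, B u v = B v u)
    (hnd : ∀ w, w ≠ 0 → ∃ w', B w w' ≠ 0) {V : Submodule ℂ E} (hV : Module.finrank ℂ V = 2)
    (hpos : ∀ w ∈ V, w ≠ 0 → 0 < B w w + B (Complex.I • w) (Complex.I • w)) :
    ∃ p₁ p₂ e₁ e₂ : E, 0 < B p₁ p₁ ∧ 0 < B p₂ p₂ ∧ B p₁ p₂ = 0 ∧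
      ∀ η : ℂ, B p₁ (η • e₁) = η.re ∧ B p₂ (η • e₁) = η.im ∧
        B p₁ (η • e₂) = η.re ∧ B p₂ (η • e₂) = -η.im := by
  obtain ⟨w, hwV, hw0, hww, hwI⟩ := exists_isotropic hB hV
  set β := B w w with hβ
  have hβ0 : 0 < β := by have := hpos w hwV hw0; rw [hww] at this; linarith
  have hIw : B (Complex.I • w) w = 0 := by rw [hB, hwI]
  have hII : ∀ v : E, Complex.I • Complex.I • v = -v := fun v => by
    rw [smul_smul, Complex.I_mul_I, neg_one_smul]
  have hw₁ : ∀ η : ℂ, B w (η • w) = β * η.re := fun η => by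
    rw [complex_smul_eq_real_smul_add]; simp [hwI]; rw [← hβ]; ring
  have hw₂ : ∀ η : ℂ, B (Complex.I • w) (η • w) = β * η.im := fun η => by
    rw [complex_smul_eq_real_smul_add η w]; simp [hIw, hww]; ring
  have hdiv : ∀ η : ℂ, η • ((β⁻¹ : ℝ) : ℂ) • w = ((β⁻¹ : ℝ) * η) • w := fun η => by
    rw [smul_smul, mul_comm]
  by_cases hanti : ∀ v, B w (Complex.I • v) = -B (Complex.I • w) v ∧
      B (Complex.I • w) (Complex.I • v) = B w v
  swap
  · push Not at hanti
    obtain ⟨v, hv⟩ := hanti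
    set c : ℂ := ⟨(B w v + B (Complex.I • w) (Complex.I • v)) / 2,
      (B (Complex.I • w) v - B w (Complex.I • v)) / 2⟩ with hc
    set d : ℂ := ⟨(B w v - B (Complex.I • w) (Complex.I • v)) / 2,
      (B (Complex.I • w) v + B w (Complex.I • v)) / 2⟩ with hd
    have hd0 : d ≠ 0 := fun h => by
      have h1 := congrArg Complex.re h
      have h2 := congrArg Complex.im h
      simp only [hd, Complex.zero_re, Complex.zero_im] at h1 h2
      exact hv (by linarith) (by linarith)
    set x := v - (c * ((β⁻¹ : ℝ) : ℂ)) • w with hx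
    have hx₁ : ∀ η : ℂ, B w (η • x) = (starRingEnd ℂ η * d).re := fun η => by
      rw [hx, smul_sub, smul_smul, map_sub, hw₁, ← mul_assoc, Complex.re_mul_ofReal,
        complex_smul_eq_real_smul_add η v]
      simp only [map_add, map_smul, smul_eq_mul, Complex.mul_re, hc, hd, Complex.conj_re,
        Complex.conj_im]
      field_simp; ring
    have hx₂ : ∀ η : ℂ, B (Complex.I • w) (η • x) = (starRingEnd ℂ η * d).im := fun η => by
      rw [hx, smul_sub, smul_smul, map_sub, hw₂, ← mul_assoc, Complex.im_mul_ofReal,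
        complex_smul_eq_real_smul_add η v]
      simp only [map_add, map_smul, smul_eq_mul, Complex.mul_im, hc, hd, Complex.conj_re,
        Complex.conj_im]
      field_simp; ring
    refine ⟨w, Complex.I • w, ((β⁻¹ : ℝ) : ℂ) • w, (starRingEnd ℂ d)⁻¹ • x, hβ0, by rwa [hww], hwI,
      fun η => ⟨?_, ?_, ?_, ?_⟩⟩
    · rw [hdiv, hw₁, Complex.re_ofReal_mul]; field_simp
    · rw [hdiv, hw₂, Complex.im_ofReal_mul]; field_simp
    · rw [smul_smul, hx₁]; simp [hd0]
    · rw [smul_smul, hx₂]; simp [hd0]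
  obtain ⟨x₀, hx₀V, hx₀⟩ : ∃ x₀ ∈ V, ∀ c : ℂ, x₀ ≠ c • w := by
    by_contra! h
    have hle : V ≤ Submodule.span ℂ {w} := fun x hx => by
      obtain ⟨c, hc⟩ := h x hx
      exact Submodule.mem_span_singleton.2 ⟨c, hc.symm⟩
    have := (Submodule.finrank_mono hle).trans (finrank_span_le_card ({w} : Set E))
    simp [hV] at this
  set x := x₀ - (B w x₀ / β) • w - (B (Complex.I • w) x₀ / β) • Complex.I • w with hx
  have hxw : B x w = 0 := by
    rw [hB, hx]; simp only [map_sub, map_smul, smul_eq_mul, hwI]; rw [← hβ]; field_simp; ring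
  have hxIw : B x (Complex.I • w) = 0 := by
    rw [hB, hx]; simp only [map_sub, map_smul, smul_eq_mul, hww, hIw]; field_simp; ring
  have hxne : ∀ a b : ℝ, x ≠ a • w + b • Complex.I • w := fun a b h => by
    refine hx₀ ⟨a + B w x₀ / β, b + B (Complex.I • w) x₀ / β⟩ ?_
    rw [complex_smul_eq_real_smul_add]
    simp only
    have : x₀ = x + (B w x₀ / β) • w + (B (Complex.I • w) x₀ / β) • Complex.I • w := by
      rw [hx]; abel
    rw [h] at this
    exact this.trans (by module)
  obtain ⟨u, hu₁, hu₂, hux⟩ : ∃ u, B w u = 0 ∧ B (Complex.I • w) u = 0 ∧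
      (B x u ≠ 0 ∨ B x (Complex.I • u) ≠ 0) := by
    obtain ⟨v, hv⟩ := hnd x (fun h => hxne 0 0 (by simpa using h))
    refine ⟨v - (B w v / β) • w - (B (Complex.I • w) v / β) • Complex.I • w, ?_, ?_, .inl ?_⟩
    · simp only [map_sub, map_smul, smul_eq_mul, hwI]; rw [← hβ]; field_simp; ring
    · simp only [map_sub, map_smul, smul_eq_mul, hww, hIw]; field_simp; ring
    · simpa [hxw, hxIw] using hv
  have hu₁' : ∀ η : ℂ, B w (η • u) = 0 := fun η => by
    rw [complex_smul_eq_real_smul_add]; simp [hu₁, (hanti u).1, hu₂]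
  have hu₂' : ∀ η : ℂ, B (Complex.I • w) (η • u) = 0 := fun η => by
    rw [complex_smul_eq_real_smul_add η u]; simp [hu₁, (hanti u).2, hu₂]
  set d : ℂ := ⟨B x u, -B x (Complex.I • u)⟩ with hd
  have hd0 : d ≠ 0 := fun h => by
    have h1 := congrArg Complex.re h
    have h2 := congrArg Complex.im h
    simp only [hd, Complex.zero_re, Complex.zero_im] at h1 h2
    rcases hux with h | h
    · exact h h1
    · exact h (by linarith)
  have hxu : ∀ η : ℂ, B x (η • u) = (η * d).re := fun η => by
    rw [complex_smul_eq_real_smul_add]; simp [hd]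
  have hxη : ∀ η : ℂ, B x (η • w) = 0 := fun η => by
    rw [complex_smul_eq_real_smul_add]; simp [hxw, hxIw]
  set κ := √(β / (|B x x| + 1)) with hκ
  have hκ0 : 0 < κ := by positivity
  have hκ2 : κ ^ 2 * |B x x| < β := by
    rw [hκ, Real.sq_sqrt (by positivity), div_mul_eq_mul_div, div_lt_iff₀ (by positivity)]
    nlinarith
  have hsplit : ∀ v, B (Complex.I • w + κ • x) v = B (Complex.I • w) v + κ * B x v := fun v => by
    rw [map_add B, map_smul B]; rfl
  refine ⟨w, Complex.I • w + κ • x, ((β⁻¹ : ℝ) : ℂ) • w,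
    (2 * Complex.I / (κ * d)) • u + ((β⁻¹ : ℝ) : ℂ) • w, hβ0, ?_, ?_, fun η => ⟨?_, ?_, ?_, ?_⟩⟩
  · simp only [map_add, map_smul, add_apply, smul_apply, smul_eq_mul, hww, hxIw,
      hB (Complex.I • w) x]
    nlinarith [neg_abs_le (B x x), sq_nonneg κ]
  · simp [hwI, hB w x, hxw]
  · rw [hdiv, hw₁, Complex.re_ofReal_mul]; field_simp
  · rw [hsplit, hdiv, hw₂, hxη, Complex.im_ofReal_mul]
    simp; field_simp
  · rw [smul_add, map_add, hdiv, hw₁, Complex.re_ofReal_mul, smul_smul, hu₁']; field_simp; ring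
  · rw [hsplit, smul_add, hdiv, smul_smul, map_add, map_add, hw₂,
      hxη, hu₂', hxu, Complex.im_ofReal_mul]
    have : η * (2 * Complex.I / (κ * d)) * d = ((2 / κ : ℝ) : ℂ) * (η * Complex.I) := by
      push_cast; field_simp
    rw [this, Complex.re_ofReal_mul]
    simp
    field_simp; ring

omit [NormedSpace ℂ E] [IsScalarTower ℝ ℂ E] in
/-- Adding nonnegative multiples of the squares of `B p₁`, `B p₂` keeps a form nondegenerate,
uniformly. -/
theorem exists_le_norm_add_squares [FiniteDimensional ℝ E] {B : E →L[ℝ] E →L[ℝ] ℝ}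
    (hB : ∀ u v, B u v = B v u) (hnd : ∀ w, w ≠ 0 → ∃ w', B w w' ≠ 0) {p₁ p₂ : E}
    (h₁ : 0 < B p₁ p₁) (h₂ : 0 < B p₂ p₂) (h₁₂ : B p₁ p₂ = 0) :
    ∃ c > 0, ∀ K : ℝ, 0 ≤ K → ∀ z, c * ‖z‖ ≤ ‖B z + K • (B p₁ z • B p₁ + B p₂ z • B p₂)‖ := by
  have hker : (B : E →ₗ[ℝ] E →L[ℝ] ℝ).ker = ⊥ := by
    refine LinearMap.ker_eq_bot'.2 fun w hw => ?_
    by_contra h0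
    obtain ⟨w', hw'⟩ := hnd w h0
    exact hw' (by rw [show B w = 0 from hw]; rfl)
  obtain ⟨C₁, -, hC₁⟩ := LinearMap.exists_antilipschitzWith (B : E →ₗ[ℝ] E →L[ℝ] ℝ) hker
  have hC₁' : ∀ z, ‖z‖ ≤ C₁ * ‖B z‖ := fun z => by
    have := hC₁.le_mul_dist z 0
    simpa using this
  set β₁ := B p₁ p₁
  set β₂ := B p₂ p₂
  have h₂₁ : B p₂ p₁ = 0 := by rw [hB, h₁₂]
  set Q : E →L[ℝ] E := ContinuousLinearMap.id ℝ E - β₁⁻¹ • (B p₁).smulRight p₁ -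
    β₂⁻¹ • (B p₂).smulRight p₂ with hQ
  have hQv : ∀ v, Q v = v - (β₁⁻¹ * B p₁ v) • p₁ - (β₂⁻¹ * B p₂ v) • p₂ := fun v => by
    simp [hQ, smul_smul]
  have hQ₁ : ∀ v, B p₁ (Q v) = 0 := fun v => by
    rw [hQv]; simp only [map_sub, map_smul, h₁₂, smul_eq_mul]
    rw [show B p₁ p₁ = β₁ from rfl]; field_simp; ring
  have hQ₂ : ∀ v, B p₂ (Q v) = 0 := fun v => by
    rw [hQv]; simp only [map_sub, map_smul, h₂₁, smul_eq_mul]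
    rw [show B p₂ p₂ = β₂ from rfl]; field_simp; ring
  set C := C₁ * ‖Q‖ + β₁⁻¹ * ‖p₁‖ ^ 2 + β₂⁻¹ * ‖p₂‖ ^ 2 with hC
  have hC0 : 0 ≤ C := by positivity
  refine ⟨(C + 1)⁻¹, by positivity, fun K hK z => ?_⟩
  set M := B z + K • (B p₁ z • B p₁ + B p₂ z • B p₂) with hM
  have hx₁ : |B p₁ z| ≤ ‖M‖ * ‖p₁‖ := by
    have : M p₁ = B p₁ z * (1 + K * β₁) := by
      simp only [hM, add_apply, smul_apply, smul_eq_mul, hB z p₁, h₂₁]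
      rw [show B p₁ p₁ = β₁ from rfl]; ring
    refine le_trans ?_ (M.le_opNorm p₁)
    rw [this, Real.norm_eq_abs, abs_mul]
    refine le_mul_of_one_le_right (abs_nonneg _) ?_
    rw [abs_of_nonneg (by positivity)]
    have : 0 ≤ K * β₁ := by positivity
    linarith
  have hx₂ : |B p₂ z| ≤ ‖M‖ * ‖p₂‖ := by
    have : M p₂ = B p₂ z * (1 + K * β₂) := by
      simp only [hM, add_apply, smul_apply, smul_eq_mul, hB z p₂, h₁₂]
      rw [show B p₂ p₂ = β₂ from rfl]; ring
    refine le_trans ?_ (M.le_opNorm p₂)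
    rw [this, Real.norm_eq_abs, abs_mul]
    refine le_mul_of_one_le_right (abs_nonneg _) ?_
    rw [abs_of_nonneg (by positivity)]
    have : 0 ≤ K * β₂ := by positivity
    linarith
  have hn : ‖B (Q z)‖ ≤ ‖M‖ * ‖Q‖ := by
    refine ContinuousLinearMap.opNorm_le_bound _ (by positivity) fun v => ?_
    have : B (Q z) v = M (Q v) := by
      simp only [hM, add_apply, smul_apply, smul_eq_mul, hQ₁, hQ₂, mul_zero, add_zero]
      have e1 : B (Q z) v = B (Q z) (Q v) := by
        conv_rhs => rw [hQv v]
        simp [hB (Q z) p₁, hB (Q z) p₂, hQ₁, hQ₂]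
      rw [e1]
      conv_lhs => rw [hQv z]
      simp [hQ₁, hQ₂]
    rw [this, mul_assoc]
    exact (M.le_opNorm _).trans (mul_le_mul_of_nonneg_left (Q.le_opNorm v) (norm_nonneg _))
  have hz : ‖z‖ ≤ C * ‖M‖ := by
    have e : z = Q z + (β₁⁻¹ * B p₁ z) • p₁ + (β₂⁻¹ * B p₂ z) • p₂ := by rw [hQv]; abel
    have n0 : ‖Q z‖ ≤ C₁ * (‖M‖ * ‖Q‖) :=
      (hC₁' _).trans (mul_le_mul_of_nonneg_left hn C₁.2)
    have n1 : ‖(β₁⁻¹ * B p₁ z) • p₁‖ ≤ β₁⁻¹ * (‖M‖ * ‖p₁‖) * ‖p₁‖ := by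
      rw [norm_smul, Real.norm_eq_abs, abs_mul, abs_of_pos (inv_pos.2 h₁)]
      gcongr
    have n2 : ‖(β₂⁻¹ * B p₂ z) • p₂‖ ≤ β₂⁻¹ * (‖M‖ * ‖p₂‖) * ‖p₂‖ := by
      rw [norm_smul, Real.norm_eq_abs, abs_mul, abs_of_pos (inv_pos.2 h₂)]
      gcongr
    calc ‖z‖ = ‖Q z + (β₁⁻¹ * B p₁ z) • p₁ + (β₂⁻¹ * B p₂ z) • p₂‖ := by rw [← e]
      _ ≤ ‖Q z‖ + ‖(β₁⁻¹ * B p₁ z) • p₁‖ + ‖(β₂⁻¹ * B p₂ z) • p₂‖ := norm_add₃_le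
      _ ≤ _ := by rw [hC]; linarith
  rw [inv_mul_le_iff₀ (by positivity)]
  nlinarith [norm_nonneg M]

end Bilinear

section SmoothedNorm
variable {E : Type*} [NormedAddCommGroup E] [NormedSpace ℝ E]

/-- A smooth convex approximation of the seminorm `√(l₁² + l₂²)`. -/
noncomputable def smoothedNorm (l₁ l₂ : E →L[ℝ] ℝ) (μ : ℝ) (z : E) : ℝ :=
  √(l₁ z ^ 2 + l₂ z ^ 2 + μ ^ 2)

/-- The derivative of `smoothedNorm`. -/
noncomputable def smoothedNormDeriv (l₁ l₂ : E →L[ℝ] ℝ) (μ : ℝ) (z : E) : E →L[ℝ] ℝ :=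
  (smoothedNorm l₁ l₂ μ z)⁻¹ • (l₁ z • l₁ + l₂ z • l₂)

variable {l₁ l₂ : E →L[ℝ] ℝ} {μ : ℝ}

theorem continuous_smoothedNorm : Continuous (smoothedNorm l₁ l₂ μ) := by
  unfold smoothedNorm; fun_prop

theorem le_smoothedNorm (z : E) : μ ≤ smoothedNorm l₁ l₂ μ z :=
  Real.le_sqrt_of_sq_le (by nlinarith [sq_nonneg (l₁ z), sq_nonneg (l₂ z)])

theorem smoothedNorm_zero (hμ : 0 ≤ μ) : smoothedNorm l₁ l₂ μ 0 = μ := by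
  simp [smoothedNorm, Real.sqrt_sq hμ]

theorem le_smoothedNorm_of_sq_le {ν : ℝ} {z : E} (h : ν ^ 2 ≤ l₁ z ^ 2 + l₂ z ^ 2) :
    ν ≤ smoothedNorm l₁ l₂ μ z :=
  Real.le_sqrt_of_sq_le (by nlinarith [sq_nonneg μ])

theorem smoothedNorm_le (hμ : 0 ≤ μ) (z : E) :
    smoothedNorm l₁ l₂ μ z ≤ (‖l₁‖ + ‖l₂‖) * ‖z‖ + μ := by
  have h₁ := l₁.le_opNorm z
  have h₂ := l₂.le_opNorm z
  rw [Real.norm_eq_abs] at h₁ h₂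
  refine Real.sqrt_le_iff.2 ⟨by positivity, ?_⟩
  have h : |l₁ z| + |l₂ z| + μ ≤ (‖l₁‖ + ‖l₂‖) * ‖z‖ + μ := by linarith
  refine le_trans ?_ (pow_le_pow_left₀ (by positivity) h 2)
  rw [← sq_abs (l₁ z), ← sq_abs (l₂ z)]
  nlinarith [mul_nonneg (abs_nonneg (l₁ z)) (abs_nonneg (l₂ z)), mul_nonneg (abs_nonneg (l₁ z)) hμ,
    mul_nonneg (abs_nonneg (l₂ z)) hμ]

theorem continuous_smoothedNormDeriv (hμ : 0 < μ) : Continuous (smoothedNormDeriv l₁ l₂ μ) := by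
  unfold smoothedNormDeriv
  refine (continuous_smoothedNorm.inv₀ fun z => (hμ.trans_le (le_smoothedNorm z)).ne').smul ?_
  fun_prop

theorem norm_smoothedNormDeriv_le (hμ : 0 < μ) (z : E) :
    ‖smoothedNormDeriv l₁ l₂ μ z‖ ≤ ‖l₁‖ + ‖l₂‖ := by
  have h0 := hμ.trans_le (le_smoothedNorm (l₁ := l₁) (l₂ := l₂) z)
  have h₁ : |l₁ z| ≤ smoothedNorm l₁ l₂ μ z :=
    Real.abs_le_sqrt (by nlinarith [sq_nonneg (l₂ z), sq_nonneg μ])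
  have h₂ : |l₂ z| ≤ smoothedNorm l₁ l₂ μ z :=
    Real.abs_le_sqrt (by nlinarith [sq_nonneg (l₁ z), sq_nonneg μ])
  rw [smoothedNormDeriv, norm_smul, norm_inv, Real.norm_eq_abs, abs_of_pos h0, inv_mul_le_iff₀ h0]
  refine (norm_add_le _ _).trans ?_
  rw [norm_smul, norm_smul, Real.norm_eq_abs, Real.norm_eq_abs, mul_add]
  gcongr

theorem smoothedNorm_add_le (hμ : 0 < μ) (z v : E) :
    smoothedNorm l₁ l₂ μ z + smoothedNormDeriv l₁ l₂ μ z v ≤ smoothedNorm l₁ l₂ μ (z + v) := by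
  have h0 := hμ.trans_le (le_smoothedNorm (l₁ := l₁) (l₂ := l₂) z)
  have h1 := Real.sq_sqrt (show 0 ≤ l₁ z ^ 2 + l₂ z ^ 2 + μ ^ 2 by positivity)
  have h2 := Real.sq_sqrt (show 0 ≤ l₁ (z + v) ^ 2 + l₂ (z + v) ^ 2 + μ ^ 2 by positivity)
  have h3 : 0 ≤ smoothedNorm l₁ l₂ μ (z + v) := Real.sqrt_nonneg _
  change smoothedNorm l₁ l₂ μ z ^ 2 = _ at h1
  change smoothedNorm l₁ l₂ μ (z + v) ^ 2 = _ at h2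
  simp only [smoothedNormDeriv, smul_apply, add_apply, smul_eq_mul]
  set s := smoothedNorm l₁ l₂ μ z
  set t := smoothedNorm l₁ l₂ μ (z + v)
  rw [← sub_nonneg]
  have hcs : s ^ 2 + (l₁ z * l₁ v + l₂ z * l₂ v) ≤ s * t := by
    refine abs_le_of_sq_le_sq' ?_ (by positivity) |>.2
    rw [mul_pow, h1, h2, map_add, map_add]
    set x := l₁ z
    set y := l₂ z
    set x' := l₁ v
    set y' := l₂ v
    nlinarith [sq_nonneg (x * y' - y * x'), sq_nonneg (μ * x'), sq_nonneg (μ * y')]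
  have : t - (s + s⁻¹ * (l₁ z * l₁ v + l₂ z * l₂ v)) =
      s⁻¹ * (s * t - (s ^ 2 + (l₁ z * l₁ v + l₂ z * l₂ v))) := by field_simp
  rw [this]
  exact mul_nonneg (inv_nonneg.2 h0.le) (by linarith)

end SmoothedNorm

section Critical
variable {E : Type*} [NormedAddCommGroup E] [NormedSpace ℝ E]

/-- Near a nondegenerate critical point, adding nonnegative multiples of the squares of `B p₁`,
`B p₂` creates no new critical points. -/
theorem exists_radius_fderiv_add_ne_zero {ρ : E → ℝ} {Ω : Set E} (hΩ : IsOpen Ω)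
    (hρ : ContDiffOn ℝ 2 ρ Ω) {q : E} (hq : q ∈ Ω) (hcrit : fderiv ℝ ρ q = 0) {p₁ p₂ : E} {c : ℝ}
    (hc : 0 < c)
    (hle : ∀ K : ℝ, 0 ≤ K → ∀ z, c * ‖z‖ ≤ ‖fderiv ℝ (fderiv ℝ ρ) q z +
      K • (fderiv ℝ (fderiv ℝ ρ) q p₁ z • fderiv ℝ (fderiv ℝ ρ) q p₁ +
        fderiv ℝ (fderiv ℝ ρ) q p₂ z • fderiv ℝ (fderiv ℝ ρ) q p₂)‖) :
    ∃ R > 0, ball q R ⊆ Ω ∧ ∃ C ≥ 0, ∀ z ∈ ball q R, ‖fderiv ℝ ρ z‖ ≤ C * ‖z - q‖ ∧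
      (z ≠ q → ∀ K : ℝ, 0 ≤ K → fderiv ℝ ρ z +
        K • (fderiv ℝ (fderiv ℝ ρ) q p₁ (z - q) • fderiv ℝ (fderiv ℝ ρ) q p₁ +
        fderiv ℝ (fderiv ℝ ρ) q p₂ (z - q) • fderiv ℝ (fderiv ℝ ρ) q p₂) ≠ 0) := by
  set B := fderiv ℝ (fderiv ℝ ρ) q
  have hd : HasFDerivAt (fderiv ℝ ρ) B q :=
    (((hρ.fderiv_of_isOpen hΩ (m := 1) (by norm_num)).contDiffAt (hΩ.mem_nhds hq)).differentiableAt
      (by norm_num)).hasFDerivAt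
  have hlit := hd.isLittleO.def (half_pos hc)
  obtain ⟨R, hR, hball⟩ := Metric.eventually_nhds_iff_ball.1 (hlit.and (hΩ.mem_nhds hq))
  refine ⟨R, hR, fun z hz => (hball z hz).2, ‖B‖ + c / 2, by positivity, fun z hz => ⟨?_, ?_⟩⟩
  · have h := (hball z hz).1
    rw [hcrit, sub_zero] at h
    calc ‖fderiv ℝ ρ z‖ = ‖B (z - q) + (fderiv ℝ ρ z - B (z - q))‖ := by congr 1; abel
      _ ≤ ‖B (z - q)‖ + ‖fderiv ℝ ρ z - B (z - q)‖ := norm_add_le _ _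
      _ ≤ ‖B‖ * ‖z - q‖ + c / 2 * ‖z - q‖ := add_le_add (B.le_opNorm _) h
      _ = _ := by ring
  · intro hne K hK h0
    have h := (hball z hz).1
    rw [hcrit, sub_zero] at h
    have h1 := hle K hK (z - q)
    set Q := K • (B p₁ (z - q) • B p₁ + B p₂ (z - q) • B p₂)
    have h2 : B (z - q) + Q = -(fderiv ℝ ρ z - B (z - q)) := by
      rw [← sub_eq_zero, ← h0]; abel
    rw [h2, norm_neg] at h1
    have h3 : 0 < ‖z - q‖ := norm_pos_iff.2 (sub_ne_zero.2 hne)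
    nlinarith

end Critical

section Noncritical
variable {E : Type*} [NormedAddCommGroup E] [NormedSpace ℂ E] [NormedSpace ℝ E]
  [IsScalarTower ℝ ℂ E] [FiniteDimensional ℂ E]

theorem DiscProblem.Admissible.exists_push_level_add_convex {P : DiscProblem E} {g : ℂ → E}
    (hg : P.Admissible g) {ρ : E → ℝ} (hρ : ContDiffOn ℝ 2 ρ P.Ω)
    (hLevi : ∀ z ∈ P.Ω, ∃ V : Submodule ℂ E, Module.finrank ℂ V = 2 ∧ ∀ w ∈ V, w ≠ 0 →
      0 < fderiv ℝ (fderiv ℝ ρ) z w w +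
        fderiv ℝ (fderiv ℝ ρ) z (Complex.I • w) (Complex.I • w))
    {h : E → ℝ} {L : E → E →L[ℝ] ℝ} (hh : Continuous h) (hL : Continuous L)
    (hconv : ∀ z v, h z + L z v ≤ h (z + v)) {a b c₀ c₁ : ℝ}
    (hcpt : IsCompact {z ∈ P.Ω | a ≤ ρ z ∧ ρ z ≤ b})
    (hsub : ∀ z ∈ P.Ω, c₀ ≤ ρ z + h z → ρ z + h z ≤ c₁ →
      a ≤ ρ z ∧ ρ z ≤ b ∧ fderiv ℝ ρ z + L z ≠ 0)
    (hbd : ∀ ζ ∈ sphere (0 : ℂ) 1, c₀ < ρ (g ζ) + h (g ζ)) :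
    ∃ g', P.Admissible g' ∧ ∀ ζ ∈ sphere (0 : ℂ) 1, c₁ < ρ (g' ζ) + h (g' ζ) := by
  have hτ : ContinuousOn (fun z => ρ z + h z) P.Ω := hρ.continuousOn.add hh.continuousOn
  refine hg.exists_push_level hτ (c₀ := c₀) ?_ (fun p hp h₀ h₁ => ?_) hbd
  · have hcl := (hτ.mono (Set.sep_subset _ _)).preimage_isClosed_of_isClosed hcpt.isClosed
      (isClosed_Icc (a := c₀) (b := c₁))
    have hcpt' := hcpt.of_isClosed_subset hcl Set.inter_subset_left
    convert hcpt' using 1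
    ext z
    refine ⟨fun hz => ⟨⟨hz.1, ?_⟩, hz.2⟩, fun hz => ⟨hz.1.1, hz.2⟩⟩
    have := hsub z hz.1 hz.2.1 hz.2.2
    exact ⟨this.1, this.2.1⟩
  · obtain ⟨V, hV, hpos⟩ := hLevi p hp
    exact isLocallyPushable_add_convex P.isOpen_Ω hρ hp hV hpos hL hconv (hsub p hp h₀ h₁).2.2

end Noncritical

section Cross
variable {E : Type*} [NormedAddCommGroup E] [NormedSpace ℂ E] [NormedSpace ℝ E]
  [IsScalarTower ℝ ℂ E]

theorem le_norm_of_crossing {ν t : ℝ} (hν : 0 ≤ ν) {ph η : ℂ} (hph : ‖ph‖ = 1)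
    (hη : ‖η‖ = 1) :
    ν ≤ ‖ph * ((t : ℂ) - (max 0 (ν - t) : ℝ) * ((η ^ 2).re : ℂ) +
      Complex.I * ((2 * √(ν * max 0 (ν - t)) : ℝ) : ℂ) * (η.re : ℂ))‖ := by
  rw [norm_mul, hph, one_mul]
  set a := max 0 (ν - t) with ha
  have ha0 : 0 ≤ a := le_max_left _ _
  have hs := Real.sq_sqrt (show 0 ≤ ν * a by positivity)
  have h1 : η.re ^ 2 + η.im ^ 2 = 1 := by
    have := Complex.sq_norm η
    rw [hη, Complex.normSq_apply] at this
    nlinarith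
  have h2 : (η ^ 2).re = 2 * η.re ^ 2 - 1 := by
    rw [pow_two, Complex.mul_re]; nlinarith
  refine abs_le_of_sq_le_sq ?_ (norm_nonneg _) |> (le_abs_self ν).trans
  rw [Complex.sq_norm, Complex.normSq_apply]
  simp only [Complex.add_re, Complex.sub_re, Complex.ofReal_re, Complex.mul_re, Complex.I_re,
    Complex.I_im, Complex.ofReal_im, Complex.add_im, Complex.sub_im, Complex.mul_im, h2]
  set s := √(ν * a)
  set x := η.re
  have h3 : ν ^ 2 ≤ (t - a * (2 * x ^ 2 - 1)) ^ 2 + 4 * (ν * a) * x ^ 2 := by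
    rcases le_total t ν with h | h
    · rw [max_eq_right (by linarith)] at ha
      have : t = ν - a := by linarith
      rw [this]
      nlinarith [sq_nonneg (a * x ^ 2)]
    · rw [max_eq_left (by linarith)] at ha
      rw [ha]; nlinarith
  nlinarith

omit [NormedSpace ℝ E] [IsScalarTower ℝ ℂ E] in
theorem norm_crossing_le {ν a b : ℝ} {e₁ e₂ : E} {ph : ℂ} (hph : ‖ph‖ = 1) (ha0 : 0 ≤ a)
    (ha : a ≤ ν) (hb0 : 0 ≤ b) (hb : b ≤ 2 * ν) :
    ‖((b / 2 : ℝ) * (Complex.I * ph) : ℂ) • e₁ -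
        ((b / 2 : ℝ) * (Complex.I * starRingEnd ℂ ph) : ℂ) • e₂‖ +
      ‖-(((a / 2 : ℝ) * ph : ℂ) • e₁ + ((a / 2 : ℝ) * starRingEnd ℂ ph : ℂ) • e₂)‖ ≤
      3 / 2 * ν * (‖e₁‖ + ‖e₂‖) := by
  have hb' : ‖((b / 2 : ℝ) : ℂ)‖ = b / 2 := by
    rw [Complex.norm_real, Real.norm_eq_abs, abs_of_nonneg (by positivity)]
  have ha' : ‖((a / 2 : ℝ) : ℂ)‖ = a / 2 := by
    rw [Complex.norm_real, Real.norm_eq_abs, abs_of_nonneg (by positivity)]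
  have h1 := norm_sub_le (((b / 2 : ℝ) * (Complex.I * ph) : ℂ) • e₁)
    (((b / 2 : ℝ) * (Complex.I * starRingEnd ℂ ph) : ℂ) • e₂)
  have h2 := norm_add_le (((a / 2 : ℝ) * ph : ℂ) • e₁) (((a / 2 : ℝ) * starRingEnd ℂ ph : ℂ) • e₂)
  simp only [norm_smul, norm_mul, hb', ha', Complex.norm_I, hph, RCLike.norm_conj, mul_one] at h1 h2
  rw [norm_neg]
  have := norm_nonneg e₁
  have := norm_nonneg e₂
  nlinarith

omit [IsScalarTower ℝ ℂ E] in
theorem apply_crossing {l : E →L[ℝ] ℂ} {e₁ e₂ : E} (h₁ : ∀ η : ℂ, l (η • e₁) = η)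
    (h₂ : ∀ η : ℂ, l (η • e₂) = starRingEnd ℂ η) {a b : ℝ} {ph η : ℂ} :
    l (η • (((b / 2 : ℝ) * (Complex.I * ph) : ℂ) • e₁ -
        ((b / 2 : ℝ) * (Complex.I * starRingEnd ℂ ph) : ℂ) • e₂) +
      η ^ 2 • (-(((a / 2 : ℝ) * ph : ℂ) • e₁ + ((a / 2 : ℝ) * starRingEnd ℂ ph : ℂ) • e₂))) =
    ph * (Complex.I * (b : ℂ) * (η.re : ℂ) - a * ((η ^ 2).re : ℂ)) := by
  rw [smul_sub, smul_neg, smul_add]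
  simp only [smul_smul]
  rw [map_add, map_sub, map_neg, map_add, h₁, h₂, h₁, h₂]
  simp only [map_mul, Complex.conj_ofReal, Complex.conj_I, Complex.conj_conj]
  rw [Complex.re_eq_add_conj, Complex.re_eq_add_conj, map_pow]
  push_cast
  ring

variable [FiniteDimensional ℂ E]
namespace DiscProblem
variable {P : DiscProblem E} {g : ℂ → E}

omit [IsScalarTower ℝ ℂ E] in
/-- Pushing the boundary off the tube `‖l (z - q)‖ < ν` near `q`. -/
theorem Admissible.exists_push_off (hg : P.Admissible g) {l : E →L[ℝ] ℂ} {e₁ e₂ : E}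
    (h₁ : ∀ η : ℂ, l (η • e₁) = η) (h₂ : ∀ η : ℂ, l (η • e₂) = starRingEnd ℂ η) {q : E} {R ν : ℝ}
    (hR : 0 < R) (hball : ball q (3 * R) ⊆ P.Ω) (hν : 0 < ν)
    (hνR : 3 / 2 * ν * (‖e₁‖ + ‖e₂‖) ≤ R) (hne : ∀ ζ ∈ sphere (0 : ℂ) 1, l (g ζ - q) ≠ 0)
    {τ : E → ℝ} (hτ : ContinuousOn τ P.Ω) {ε : ℝ} (hε : 0 < ε) :
    ∃ g', P.Admissible g' ∧ ∀ ζ ∈ sphere (0 : ℂ) 1, ∃ z ∈ P.Ω, τ z - ε < τ (g' ζ) ∧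
      (z = g ζ ∨ g ζ ∈ ball q (2 * R) ∧ dist z (g ζ) ≤ 3 / 2 * ν * (‖e₁‖ + ‖e₂‖)) ∧
      (g ζ ∈ ball q R → ν ≤ ‖l (z - q)‖) := by
  set χ : E → ℝ := fun z => max 0 (min 1 (2 - dist z q / R)) with hχ
  have hχc : Continuous χ := by
    rw [hχ]; fun_prop
  have hχ0 : ∀ z, 0 ≤ χ z := fun z => le_max_left _ _
  have hχ1 : ∀ z, χ z ≤ 1 := fun z => max_le zero_le_one (min_le_left _ _)
  have hχR : ∀ z ∈ ball q R, χ z = 1 := fun z hz => by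
    have : dist z q / R < 1 := (div_lt_one hR).2 hz
    rw [hχ]; simp only
    rw [min_eq_left (by linarith), max_eq_right zero_le_one]
  have hχ2R : ∀ z ∉ ball q (2 * R), χ z = 0 := fun z hz => by
    have : 2 ≤ dist z q / R := (le_div_iff₀ hR).2 (by simpa using hz)
    rw [hχ]; simp only
    exact max_eq_left ((min_le_right _ _).trans (by linarith))
  set y : ℂ → ℂ := fun ζ => l (g ζ - q) with hy
  set ph : ℂ → ℂ := fun ζ => y ζ / (‖y ζ‖ : ℂ) with hph
  set A : ℂ → ℝ := fun ζ => max 0 (ν * χ (g ζ) - ‖y ζ‖) with hA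
  set B : ℂ → ℝ := fun ζ => 2 * √(ν * A ζ) with hB
  have hgc := hg.continuousOn_sphere
  have hyc : ContinuousOn y (sphere 0 1) :=
    l.continuous.comp_continuousOn (hgc.sub continuousOn_const)
  have hy0 : ∀ ζ ∈ sphere (0 : ℂ) 1, ‖y ζ‖ ≠ 0 := fun ζ hζ => norm_ne_zero_iff.2 (hne ζ hζ)
  have hphc : ContinuousOn ph (sphere 0 1) :=
    hyc.div (Complex.continuous_ofReal.comp_continuousOn hyc.norm) fun ζ hζ =>
      Complex.ofReal_ne_zero.2 (hy0 ζ hζ)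
  have hAc : ContinuousOn A (sphere 0 1) :=
    continuousOn_const.sup ((continuousOn_const.mul (hχc.comp_continuousOn hgc)).sub hyc.norm)
  have hBc : ContinuousOn B (sphere 0 1) :=
    continuousOn_const.mul (Real.continuous_sqrt.comp_continuousOn (continuousOn_const.mul hAc))
  have hph1 : ∀ ζ ∈ sphere (0 : ℂ) 1, ‖ph ζ‖ = 1 := fun ζ hζ => by
    rw [hph]; simp only
    rw [norm_div, Complex.norm_real, norm_norm, div_self (hy0 ζ hζ)]
  have hA0 : ∀ ζ, 0 ≤ A ζ := fun ζ => le_max_left _ _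
  have hAν : ∀ ζ, A ζ ≤ ν := fun ζ => max_le hν.le (by nlinarith [hχ1 (g ζ), norm_nonneg (y ζ)])
  have hB0 : ∀ ζ, 0 ≤ B ζ := fun ζ => by positivity
  have hBν : ∀ ζ, B ζ ≤ 2 * ν := fun ζ => by
    refine mul_le_mul_of_nonneg_left (Real.sqrt_le_iff.2 ⟨hν.le, ?_⟩) zero_le_two
    nlinarith [hAν ζ]
  set A₁ : ℂ → E := fun ζ => ((B ζ / 2 : ℝ) * (Complex.I * ph ζ) : ℂ) • e₁ -
        ((B ζ / 2 : ℝ) * (Complex.I * starRingEnd ℂ (ph ζ)) : ℂ) • e₂ with hA₁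
  set A₂ : ℂ → E := fun ζ => -(((A ζ / 2 : ℝ) * ph ζ : ℂ) • e₁ +
    ((A ζ / 2 : ℝ) * starRingEnd ℂ (ph ζ) : ℂ) • e₂) with hA₂
  have hA₁c : ContinuousOn A₁ (sphere 0 1) := by
    have hc := Complex.continuous_ofReal.comp_continuousOn (hBc.div_const 2)
    have hs := Complex.continuous_conj.comp_continuousOn hphc
    exact ((hc.mul (continuousOn_const.mul hphc)).smul continuousOn_const).sub
      ((hc.mul (continuousOn_const.mul hs)).smul continuousOn_const)
  have hA₂c : ContinuousOn A₂ (sphere 0 1) := by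
    have hc := Complex.continuous_ofReal.comp_continuousOn (hAc.div_const 2)
    have hs := Complex.continuous_conj.comp_continuousOn hphc
    exact (((hc.mul hphc).smul continuousOn_const).add
      ((hc.mul hs).smul continuousOn_const)).neg
  have hnorm : ∀ ζ ∈ sphere (0 : ℂ) 1, ‖A₁ ζ‖ + ‖A₂ ζ‖ ≤ 3 / 2 * ν * (‖e₁‖ + ‖e₂‖) :=
    fun ζ hζ => norm_crossing_le (hph1 ζ hζ) (hA0 ζ) (hAν ζ) (hB0 ζ) (hBν ζ)
  have hzero : ∀ ζ, g ζ ∉ ball q (2 * R) → A₁ ζ = 0 ∧ A₂ ζ = 0 := fun ζ hζ => by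
    have hAz : A ζ = 0 := by
      rw [hA]; simp only
      rw [hχ2R _ hζ]; exact max_eq_left (by simp)
    have hBz : B ζ = 0 := by rw [hB]; simp [hAz]
    constructor
    · rw [hA₁]; simp [hBz]
    · rw [hA₂]; simp [hAz]
  have hΩ : ∀ ζ ∈ sphere (0 : ℂ) 1, closedBall (g ζ) (‖A₁ ζ‖ + ‖A₂ ζ‖) ⊆ P.Ω := fun ζ hζ => by
    by_cases h : g ζ ∈ ball q (2 * R)
    · refine (closedBall_subset_ball' ?_).trans hball
      rw [mem_ball] at h
      linarith [hnorm ζ hζ]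
    · rw [(hzero ζ h).1, (hzero ζ h).2]
      simpa using hg.mem_Ω ζ hζ
  obtain ⟨g', hg', hcl⟩ := hg.exists_attach_of_continuousOn hA₁c hA₂c hΩ hτ hε
  refine ⟨g', hg', fun ζ hζ => ?_⟩
  obtain ⟨η, hη, -, hlt⟩ := hcl ζ hζ
  have hdist : dist (g ζ + η • A₁ ζ + η ^ 2 • A₂ ζ) (g ζ) ≤ ‖A₁ ζ‖ + ‖A₂ ζ‖ := by
    rw [dist_eq_norm, add_assoc, add_sub_cancel_left]
    refine (norm_add_le _ _).trans ?_
    simp [norm_smul, hη]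
  refine ⟨_, hΩ ζ hζ hdist, hlt, ?_, fun hR' => ?_⟩
  · by_cases h : g ζ ∈ ball q (2 * R)
    · exact .inr ⟨h, hdist.trans (hnorm ζ hζ)⟩
    · left; simp [(hzero ζ h).1, (hzero ζ h).2]
  · have e : g ζ + η • A₁ ζ + η ^ 2 • A₂ ζ - q = (g ζ - q) + (η • A₁ ζ + η ^ 2 • A₂ ζ) := by abel
    have hyph : y ζ = ph ζ * (‖y ζ‖ : ℂ) := by
      rw [hph]; simp only
      rw [div_mul_cancel₀ _ (Complex.ofReal_ne_zero.2 (hy0 ζ hζ))]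
    rw [e, map_add, apply_crossing h₁ h₂, show l (g ζ - q) = y ζ from rfl]
    have hAe : A ζ = max 0 (ν - ‖y ζ‖) := by
      rw [hA]; simp only
      rw [hχR _ hR', mul_one]
    have h3 := le_norm_of_crossing hν.le (hph1 ζ hζ) hη (t := ‖y ζ‖)
    rw [← hAe] at h3
    convert h3 using 2
    conv_lhs => rw [hyph]
    rw [hB]
    ring

/-- A generic small perturbation moves the boundary off the real codimension two set
`l (z - q) = 0`. -/
theorem Admissible.exists_perturb_ne_zero (hg : P.Admissible g) {l : E →L[ℝ] ℂ} {e : E}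
    (he : ∀ η : ℂ, l (η • e) = η) (q : E) {δ : ℝ} (hδ : 0 < δ) :
    ∃ g', P.Admissible g' ∧ (∀ ζ ∈ sphere (0 : ℂ) 1, dist (g' ζ) (g ζ) < δ) ∧
      ∀ ζ ∈ sphere (0 : ℂ) 1, l (g' ζ - q) ≠ 0 := by
  have : CompleteSpace E := FiniteDimensional.complete ℂ E
  obtain ⟨δ₁, hδ₁, hstab⟩ := hg.exists_stable
  obtain ⟨R, hR, hdiff⟩ := hg.exists_differentiableOn
  obtain ⟨δ₂, hδ₂, hopen⟩ := (isCompact_sphere (0 : ℂ) 1).exists_forall_dist_lt_mem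
    hg.continuousOn_sphere P.isOpen_Ω hg.mem_Ω
  set F : ℝ → ℂ := fun θ => -Complex.exp (-(2 * θ * Complex.I)) *
    l (g (Complex.exp (θ * Complex.I)) - q) with hF
  have hexp : ContDiff ℝ 1 fun θ : ℝ => Complex.exp (θ * Complex.I) :=
    (Complex.ofRealCLM.contDiff.mul contDiff_const).cexp
  have hexp2 : ContDiff ℝ 1 fun θ : ℝ => Complex.exp (-(2 * θ * Complex.I)) :=
    ((contDiff_const.mul Complex.ofRealCLM.contDiff).mul contDiff_const).neg.cexp
  have hgs : ContDiffOn ℝ 1 g (ball 0 R) :=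
    (hdiff.contDiffOn isOpen_ball).restrict_scalars ℝ
  have hFs : ContDiff ℝ 1 F := by
    refine hexp2.neg.mul (l.contDiff.comp (ContDiff.sub ?_ contDiff_const))
    refine hgs.comp_contDiff hexp fun θ => ?_
    simpa using hR
  have hdense := hFs.dense_compl_range_of_finrank_lt_finrank (by simp)
  obtain ⟨c, hcF, hc⟩ : ∃ c, c ∉ Set.range F ∧ ‖c‖ * ‖e‖ < min δ (min δ₁ δ₂) := by
    have hm : 0 < min δ (min δ₁ δ₂) := lt_min hδ (lt_min hδ₁ hδ₂)
    obtain ⟨c, hc, hcd⟩ := hdense.exists_dist_lt 0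
      (show 0 < min δ (min δ₁ δ₂) / (‖e‖ + 1) by positivity)
    refine ⟨c, hc, ?_⟩
    rw [dist_zero_left, lt_div_iff₀ (by positivity)] at hcd
    nlinarith [norm_nonneg c]
  set g' : ℂ → E := fun ζ => g ζ + (c * ζ ^ 2) • e with hg'
  have hd : ∀ ζ ∈ closedBall (0 : ℂ) 1, dist (g' ζ) (g ζ) < min δ (min δ₁ δ₂) := fun ζ hζ => by
    rw [hg', dist_eq_norm, add_sub_cancel_left, norm_smul, norm_mul, norm_pow]
    refine lt_of_le_of_lt ?_ hc
    have : ‖ζ‖ ^ 2 ≤ 1 := pow_le_one₀ (norm_nonneg _) (by simpa using hζ)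
    exact mul_le_mul_of_nonneg_right (mul_le_of_le_one_right (norm_nonneg c) this) (norm_nonneg e)
  have hpd : ∀ ζ, HasDerivAt (fun ζ : ℂ => (c * ζ ^ 2) • e) ((c * (2 * ζ)) • e) ζ := fun ζ => by
    simpa using (((hasDerivAt_pow 2 ζ).const_mul c).smul_const e)
  refine ⟨g', hstab g' ⟨R, hR, ?_⟩ ?_ ?_ (fun ζ hζ => .inl ?_) fun ζ hζ => ?_, fun ζ hζ => ?_,
    fun ζ hζ h0 => ?_⟩
  · exact hdiff.add fun ζ _ => (hpd ζ).differentiableAt.differentiableWithinAt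
  · simp [hg']
  · have h0 : DifferentiableAt ℂ g 0 :=
      hdiff.differentiableAt (isOpen_ball.mem_nhds (mem_ball_self (by linarith)))
    have := (h0.hasDerivAt.add (hpd 0)).deriv
    rw [show g' = g + fun ζ => (c * ζ ^ 2) • e from rfl]
    simpa using this
  · exact (hd ζ hζ).trans_le ((min_le_right _ _).trans (min_le_left _ _))
  · exact hopen ζ hζ _ ((hd ζ (sphere_subset_closedBall hζ)).trans_le
      ((min_le_right _ _).trans (min_le_right _ _)))
  · exact (hd ζ (sphere_subset_closedBall hζ)).trans_le (min_le_left _ _)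
  · obtain ⟨θ, rfl⟩ : ∃ θ : ℝ, Complex.exp (θ * Complex.I) = ζ :=
      Complex.norm_eq_one_iff _ |>.1 (by simpa using hζ)
    refine hcF ⟨θ, ?_⟩
    rw [hg'] at h0
    simp only at h0
    rw [add_sub_right_comm, map_add, he] at h0
    rw [hF]; simp only
    have h1 : Complex.exp (-(2 * θ * Complex.I)) * Complex.exp (θ * Complex.I) ^ 2 = 1 := by
      rw [← Complex.exp_nat_mul, ← Complex.exp_add]
      convert Complex.exp_zero using 2
      push_cast; ring
    rw [eq_neg_of_add_eq_zero_left h0]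
    linear_combination c * h1

end DiscProblem
end Cross

section PassCritical
variable {E : Type*} [NormedAddCommGroup E] [NormedSpace ℂ E] [NormedSpace ℝ E]
  [IsScalarTower ℝ ℂ E] [FiniteDimensional ℂ E]
namespace DiscProblem
variable {P : DiscProblem E} {g : ℂ → E}

theorem Admissible.exists_push_level_of_noncritical (hg : P.Admissible g) {ρ : E → ℝ}
    (hρ : ContDiffOn ℝ 2 ρ P.Ω)
    (hLevi : ∀ z ∈ P.Ω, ∃ V : Submodule ℂ E, Module.finrank ℂ V = 2 ∧ ∀ w ∈ V, w ≠ 0 →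
      0 < fderiv ℝ (fderiv ℝ ρ) z w w +
        fderiv ℝ (fderiv ℝ ρ) z (Complex.I • w) (Complex.I • w)) {a b c₀ c₁ : ℝ}
    (hcpt : IsCompact {z ∈ P.Ω | a ≤ ρ z ∧ ρ z ≤ b}) (ha : a ≤ c₀) (hb : c₁ ≤ b)
    (hne : ∀ z ∈ P.Ω, c₀ ≤ ρ z → ρ z ≤ c₁ → fderiv ℝ ρ z ≠ 0)
    (hbd : ∀ ζ ∈ sphere (0 : ℂ) 1, c₀ < ρ (g ζ)) :
    ∃ g', P.Admissible g' ∧ ∀ ζ ∈ sphere (0 : ℂ) 1, c₁ < ρ (g' ζ) := by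
  have := hg.exists_push_level_add_convex hρ hLevi (h := fun _ => 0) (L := fun _ => 0)
    continuous_const continuous_const (by simp) hcpt (c₀ := c₀) (c₁ := c₁)
    (fun z hz h₀ h₁ => by
      rw [add_zero] at h₀ h₁ ⊢
      exact ⟨ha.trans h₀, h₁.trans hb, hne z hz h₀ h₁⟩) (by simpa using hbd)
  simpa using this

theorem exists_pos_forall_mul_lt {A₁ B₁ A₂ B₂ A₃ B₃ : ℝ} (h₁ : 0 < B₁) (h₂ : 0 < B₂)
    (h₃ : 0 < B₃) : ∃ e > 0, e * A₁ < B₁ ∧ e * A₂ < B₂ ∧ e * A₃ < B₃ := by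
  have ev : ∀ A B : ℝ, 0 < B → ∀ᶠ e in 𝓝[>] (0 : ℝ), e * A < B := fun A B hB => by
    have : Tendsto (fun e : ℝ => e * A) (𝓝 0) (𝓝 (0 * A)) := tendsto_id.mul_const A
    rw [zero_mul] at this
    exact (this.mono_left nhdsWithin_le_nhds).eventually (gt_mem_nhds hB)
  obtain ⟨e, ⟨⟨h1, h2⟩, h3⟩, he⟩ :=
    ((((ev A₁ B₁ h₁).and (ev A₂ B₂ h₂)).and (ev A₃ B₃ h₃)).and self_mem_nhdsWithin).exists
  exact ⟨e, he, h1, h2, h3⟩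

variable [FiniteDimensional ℝ E]

theorem Admissible.exists_push_past_critical (hg : P.Admissible g) {ρ : E → ℝ}
    (hρ : ContDiffOn ℝ 2 ρ P.Ω)
    (hLevi : ∀ z ∈ P.Ω, ∃ V : Submodule ℂ E, Module.finrank ℂ V = 2 ∧ ∀ w ∈ V, w ≠ 0 →
      0 < fderiv ℝ (fderiv ℝ ρ) z w w +
        fderiv ℝ (fderiv ℝ ρ) z (Complex.I • w) (Complex.I • w)) {a b : ℝ}
    (hcpt : IsCompact {z ∈ P.Ω | a ≤ ρ z ∧ ρ z ≤ b}) (hbdd : Bornology.IsBounded P.Ω) {q : E}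
    (hq : q ∈ P.Ω) (hqa : a < ρ q) (hqb : ρ q < b) (hcrit : fderiv ℝ ρ q = 0)
    (hnd : ∀ w, w ≠ 0 → ∃ w', fderiv ℝ (fderiv ℝ ρ) q w w' ≠ 0)
    (huniq : ∀ z ∈ P.Ω, a ≤ ρ z → ρ z ≤ b → fderiv ℝ ρ z = 0 → z = q)
    (hbd : ∀ ζ ∈ sphere (0 : ℂ) 1, a < ρ (g ζ)) :
    ∃ g', P.Admissible g' ∧ ∀ ζ ∈ sphere (0 : ℂ) 1, b < ρ (g' ζ) := by
  have hB : ∀ u v, fderiv ℝ (fderiv ℝ ρ) q u v = fderiv ℝ (fderiv ℝ ρ) q v u :=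
    (hρ.contDiffAt (P.isOpen_Ω.mem_nhds hq)).isSymmSndFDerivAt (by simp)
  obtain ⟨V, hV, hpos⟩ := hLevi q hq
  obtain ⟨p₁, p₂, e₁, e₂, hp₁, hp₂, hp₁₂, hpe⟩ := exists_orthogonal_pair hB hnd hV hpos
  obtain ⟨c, hc, hle⟩ := exists_le_norm_add_squares hB hnd hp₁ hp₂ hp₁₂
  obtain ⟨R₀, hR₀, hR₀Ω, C, hC, hR₀'⟩ :=
    exists_radius_fderiv_add_ne_zero P.isOpen_Ω hρ hq hcrit hc hle
  set l₁ := fderiv ℝ (fderiv ℝ ρ) q p₁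
  set l₂ := fderiv ℝ (fderiv ℝ ρ) q p₂
  set l : E →L[ℝ] ℂ := l₁.smulRight (1 : ℂ) + l₂.smulRight Complex.I with hl
  have hlv : ∀ v, l v = ⟨l₁ v, l₂ v⟩ := fun v => by
    apply Complex.ext <;> simp [hl]
  have hl₁ : ∀ η : ℂ, l (η • e₁) = η := fun η => by
    rw [hlv]; apply Complex.ext
    · exact (hpe η).1
    · exact (hpe η).2.1
  have hl₂ : ∀ η : ℂ, l (η • e₂) = starRingEnd ℂ η := fun η => by
    rw [hlv]; apply Complex.ext
    · exact (hpe η).2.2.1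
    · exact (hpe η).2.2.2
  have hcont := hρ.continuousOn
  have hdcont : ContinuousOn (fderiv ℝ ρ) P.Ω :=
    hρ.continuousOn_fderiv_of_isOpen P.isOpen_Ω (by norm_num)
  set M := {z ∈ P.Ω | a ≤ ρ z ∧ ρ z ≤ b} with hM
  have hMdiff : ∀ s, IsCompact (M \ ball q s) := fun s => hcpt.diff isOpen_ball
  obtain ⟨m, hm, hmle⟩ : ∃ m > 0, ∀ z ∈ M \ ball q R₀, m ≤ ‖fderiv ℝ ρ z‖ :=
    (hMdiff R₀).exists_forall_le' (hdcont.mono fun z hz => hz.1.1).norm fun z hz =>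
      norm_pos_iff.2 fun h => hz.2 (by
        rw [huniq z hz.1.1 hz.1.2.1 hz.1.2.2 h]; exact mem_ball_self hR₀)
  obtain ⟨D, hD0, hD⟩ := hbdd.subset_ball_lt 0 q
  set U := (‖l₁‖ + ‖l₂‖) * D + 1 with hU
  have hU0 : 0 < U := by positivity
  obtain ⟨ε₀, hε₀, hε₀m, hε₀a, hε₀b⟩ := exists_pos_forall_mul_lt (A₁ := ‖l₁‖ + ‖l₂‖) hm
    (A₂ := U) (sub_pos.2 hqa) (A₃ := 2 * U) (sub_pos.2 hqb)
  set S := 3 / 2 * (‖e₁‖ + ‖e₂‖) with hS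
  have hS0 : 0 ≤ S := by positivity
  obtain ⟨R, hR, hRR₀, hRS, -⟩ := exists_pos_forall_mul_lt (A₁ := 3) hR₀
    (A₂ := 3 * C * S) (show 0 < ε₀ / 4 by positivity) (A₃ := 0) one_pos
  have h3R : ball q (3 * R) ⊆ ball q R₀ := ball_subset_ball (by linarith)
  have hLip : ∀ z ∈ ball q (3 * R), ∀ z' ∈ ball q (3 * R),
      |ρ z' - ρ z| ≤ C * (3 * R) * dist z' z := fun z hz z' hz' => by
    have := (convex_ball q (3 * R)).norm_image_sub_le_of_norm_fderiv_le (𝕜 := ℝ) (f := ρ)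
      (C := C * (3 * R)) (fun x hx => (hρ.differentiableOn (by norm_num)).differentiableAt
        (P.isOpen_Ω.mem_nhds (hR₀Ω (h3R hx)))) (fun x hx => ?_) hz hz'
    · rwa [Real.norm_eq_abs, ← dist_eq_norm] at this
    · refine (hR₀' x (h3R hx)).1.trans (mul_le_mul_of_nonneg_left ?_ hC)
      rw [← dist_eq_norm]; exact le_of_lt hx
  obtain ⟨δ, hδ, W, hW, hMW, hround⟩ := exists_push_round hcont (hMdiff (R / 2))
    (fun p hp => by
      obtain ⟨V, hV, hpos⟩ := hLevi p hp.1.1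
      have := isLocallyPushable_add_convex P.isOpen_Ω hρ hp.1.1 hV hpos (h := fun _ => 0)
        (L := fun _ => 0) continuous_const (by simp) (by
          rw [add_zero]
          exact fun h => hp.2 (by
            rw [huniq p hp.1.1 hp.1.2.1 hp.1.2.2 h]; exact mem_ball_self (half_pos hR)))
      simpa using this) (half_pos hR)
  set δ' := min (δ / 2) ((b - ρ q) / 2) with hδ'
  have hδ'0 : 0 < δ' := lt_min (half_pos hδ) (half_pos (sub_pos.2 hqb))
  have hδ'1 : δ' ≤ δ / 2 := min_le_left _ _
  have hδ'2 : δ' ≤ (b - ρ q) / 2 := min_le_right _ _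
  obtain ⟨σ, hσ, hσa, hσδ, hσR⟩ := exists_pos_forall_mul_lt (A₁ := 1) (sub_pos.2 hqa)
    (A₂ := 8) hδ'0 (A₃ := 8 / ε₀ * S) hR
  set ν := 8 * σ / ε₀ with hν
  have hν0 : 0 < ν := by positivity
  have hνε : ε₀ * ν = 8 * σ := by rw [hν]; field_simp
  have hνS : ν * S < R := by
    convert hσR using 1; rw [hν]; ring
  set μ := ν / 4 with hμ
  have hμ0 : 0 < μ := by positivity
  set h : E → ℝ := fun z => ε₀ * (smoothedNorm l₁ l₂ μ (z - q) - μ) with hh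
  set L : E → E →L[ℝ] ℝ := fun z => ε₀ • smoothedNormDeriv l₁ l₂ μ (z - q) with hL
  have hhc : Continuous h :=
    continuous_const.mul ((continuous_smoothedNorm.comp (continuous_id.sub continuous_const)).sub
      continuous_const)
  have hLc : Continuous L :=
    ((continuous_smoothedNormDeriv hμ0).comp (continuous_id.sub continuous_const)).const_smul ε₀
  have hhq : h q = 0 := by simp [hh, smoothedNorm_zero hμ0.le]
  have hh0 : ∀ z, 0 ≤ h z := fun z => mul_nonneg hε₀.le (sub_nonneg.2 (le_smoothedNorm _))
  have hhU : ∀ z ∈ P.Ω, h z ≤ ε₀ * U := fun z hz => by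
    refine mul_le_mul_of_nonneg_left ?_ hε₀.le
    have h1 := smoothedNorm_le (l₁ := l₁) (l₂ := l₂) hμ0.le (z - q)
    have h2 : ‖z - q‖ ≤ D := by
      rw [← dist_eq_norm]; exact le_of_lt (hD hz)
    have h3 := mul_le_mul_of_nonneg_left h2 (show 0 ≤ ‖l₁‖ + ‖l₂‖ by positivity)
    linarith
  have hconv : ∀ z v, h z + L z v ≤ h (z + v) := fun z v => by
    have := mul_le_mul_of_nonneg_left
      (smoothedNorm_add_le (l₁ := l₁) (l₂ := l₂) hμ0 (z - q) v) hε₀.le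
    simp only [hh, hL, smul_apply, smul_eq_mul, add_sub_right_comm z v q]
    linarith
  have hnecrit : ∀ z ∈ M, z ≠ q → fderiv ℝ ρ z + L z ≠ 0 := fun z hz hzq => by
    by_cases hzR : z ∈ ball q R₀
    · have := (hR₀' z hzR).2 hzq (ε₀ * (smoothedNorm l₁ l₂ μ (z - q))⁻¹)
        (mul_nonneg hε₀.le (inv_nonneg.2 (Real.sqrt_nonneg _)))
      rwa [mul_smul] at this
    · intro h0
      have h1 := hmle z ⟨hz, hzR⟩
      rw [eq_neg_of_add_eq_zero_left h0, norm_neg, hL] at h1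
      simp only at h1
      rw [norm_smul, Real.norm_eq_abs, abs_of_pos hε₀] at h1
      have := mul_le_mul_of_nonneg_left
        (norm_smoothedNormDeriv_le (l₁ := l₁) (l₂ := l₂) hμ0 (z - q)) hε₀.le
      linarith
  have hne : ∀ z ∈ P.Ω, a ≤ ρ z → ρ z ≤ b → ρ z ≠ ρ q → fderiv ℝ ρ z ≠ 0 :=
    fun z hz h₀ h₁ hzq h0 => hzq (by rw [huniq z hz h₀ h₁ h0])
  obtain ⟨g₁, hg₁, hbd₁⟩ := hg.exists_push_level_of_noncritical hρ hLevi hcpt le_rfl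
    (c₁ := ρ q - σ) (by linarith) (fun z hz h₀ h₁ => hne z hz h₀ (by linarith)
      (by linarith)) hbd
  obtain ⟨g₂, hg₂, hbd₂⟩ := hround P g₁ rfl hg₁ σ hσ
  set N : Set E := {z ∈ P.Ω | z ∈ ball q R ∧ ρ q - 2 * σ < ρ z ∨ ρ q + δ' / 2 < ρ z} with hN
  have hNopen : IsOpen N := by
    have h1 := hcont.isOpen_inter_preimage P.isOpen_Ω (isOpen_Ioi (a := ρ q - 2 * σ))
    have h2 := hcont.isOpen_inter_preimage P.isOpen_Ω (isOpen_Ioi (a := ρ q + δ' / 2))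
    convert (h1.inter isOpen_ball).union h2 using 1
    · ext z
      simp only [hN, Set.mem_ofPred_eq, Set.mem_union, Set.mem_inter_iff, Set.mem_preimage,
        Set.mem_Ioi]
      tauto
  have hmem₂ : ∀ ζ ∈ sphere (0 : ℂ) 1, g₂ ζ ∈ N := fun ζ hζ => by
    obtain ⟨hd, h1, h2⟩ := hbd₂ ζ hζ
    have h3 := hbd₁ ζ hζ
    refine ⟨hg₂.mem_Ω ζ hζ, ?_⟩
    by_cases hball : g₁ ζ ∈ ball q (R / 2)
    · left
      refine ⟨?_, by linarith⟩
      rw [mem_ball] at hball ⊢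
      linarith [dist_triangle (g₂ ζ) (g₁ ζ) q]
    · right
      by_cases hbb : ρ (g₁ ζ) ≤ b
      · have := h2 (hMW ⟨⟨hg₁.mem_Ω ζ hζ, by linarith, hbb⟩, hball⟩)
        linarith
      · linarith
  obtain ⟨δ₂, hδ₂, hopen⟩ := (isCompact_sphere (0 : ℂ) 1).exists_forall_dist_lt_mem
    hg₂.continuousOn_sphere hNopen hmem₂
  obtain ⟨g₃, hg₃, hd₃, hne₃⟩ := hg₂.exists_perturb_ne_zero hl₁ q hδ₂
  have hτc : ContinuousOn (fun z => ρ z + h z) P.Ω := hcont.add hhc.continuousOn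
  have hνeq : 3 / 2 * ν * (‖e₁‖ + ‖e₂‖) = ν * S := by rw [hS]; ring
  obtain ⟨g₄, hg₄, hbd₄⟩ := hg₃.exists_push_off hl₁ hl₂ hR (h3R.trans hR₀Ω) hν0
    (by rw [hνeq]; exact hνS.le) hne₃ hτc (half_pos hσ)
  have hτ₄ : ∀ ζ ∈ sphere (0 : ℂ) 1, ρ q + σ < ρ (g₄ ζ) + h (g₄ ζ) := fun ζ hζ => by
    obtain ⟨z, hzΩ, hlt, hz, hzν⟩ := hbd₄ ζ hζ
    have hρz : ρ (g₃ ζ) - 2 * σ ≤ ρ z := by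
      rcases hz with rfl | ⟨hball, hdz⟩
      · linarith
      · rw [hνeq] at hdz
        have h1 : z ∈ ball q (3 * R) := by
          rw [mem_ball] at hball ⊢
          linarith [dist_triangle z (g₃ ζ) q]
        have h2 := (abs_le.1 (hLip _ (ball_subset_ball (by linarith) hball) _ h1)).1
        have h3 : C * (3 * R) * dist z (g₃ ζ) ≤ C * (3 * R) * (ν * S) :=
          mul_le_mul_of_nonneg_left hdz (by positivity)
        have h4 : C * (3 * R) * (ν * S) ≤ ε₀ / 4 * ν := by
          have := mul_le_mul_of_nonneg_right hRS.le hν0.le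
          linarith
        linarith
    rcases (hopen ζ hζ _ (hd₃ ζ hζ)).2 with ⟨hball, h1⟩ | h1
    · have h2 := hzν hball
      have h3 : ν ≤ smoothedNorm l₁ l₂ μ (z - q) := by
        refine le_smoothedNorm_of_sq_le ((pow_le_pow_left₀ hν0.le h2 2).trans_eq ?_)
        rw [hlv, Complex.sq_norm, Complex.normSq_apply]; ring
      have h4 : ε₀ * (ν - μ) ≤ h z := mul_le_mul_of_nonneg_left (by linarith) hε₀.le
      have h5 : ε₀ * (ν - μ) = 6 * σ := by rw [hμ]; linarith
      linarith
    · have := hh0 z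
      linarith
  obtain ⟨g₅, hg₅, hbd₅⟩ := hg₄.exists_push_level_add_convex hρ hLevi hhc hLc hconv hcpt
    (c₀ := ρ q + σ) (c₁ := ρ q + 2 * (ε₀ * U)) (fun z hz h₀ h₁ => by
      have h2 := hhU z hz
      have h3 := hh0 z
      have h4 : a ≤ ρ z := by linarith
      have h5 : ρ z ≤ b := by linarith
      refine ⟨h4, h5, hnecrit z ⟨hz, h4, h5⟩ ?_⟩
      rintro rfl
      linarith) hτ₄
  have hεU : 0 < ε₀ * U := by positivity
  exact hg₅.exists_push_level_of_noncritical hρ hLevi hcpt (c₀ := ρ q + ε₀ * U) (by linarith)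
    le_rfl (fun z hz h₀ h₁ => hne z hz (by linarith) h₁ (by linarith)) fun ζ hζ => by
      have := hbd₅ ζ hζ
      have := hhU _ (hg₅.mem_Ω ζ hζ)
      linarith

end DiscProblem
end PassCritical

section Start
variable {E : Type*} [NormedAddCommGroup E] [NormedSpace ℂ E]

/-- Shrinking the parameter disc slightly makes a disc holomorphic past the unit circle without
leaving prescribed open sets. -/
theorem exists_shrink {X Ω K U : Set E} (hX : IsOpen X) (hΩ : IsOpen Ω) (hΩX : Ω ⊆ X)
    (hK : IsClosed K) (hKΩ : K ∩ Ω = ∅) {f : ℂ → E} (hf : ContinuousOn f (closedBall 0 1))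
    (hf' : DifferentiableOn ℂ f (ball 0 1)) (hfX : ∀ ζ ∈ closedBall (0 : ℂ) 1, f ζ ∈ X)
    (hU : IsOpen U) (hUΩ : U ⊆ Ω) (hfU : ∀ ζ ∈ sphere (0 : ℂ) 1, f ζ ∈ U) {r : ℝ}
    (hr0 : 0 < r) (hr1 : r < 1) (hfK : ∀ ζ ∈ closedBall (0 : ℂ) 1, r ≤ ‖ζ‖ → f ζ ∉ K) {ε : ℝ}
    (hε : 0 < ε) :
    ∃ lam : ℝ, r < lam ∧ lam < 1 ∧ ∃ (P : DiscProblem E) (g : ℂ → E), P.X = X ∧ P.Ω = Ω ∧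
      P.K = K ∧ P.f = f ∧ P.r = r ∧ P.ε = ε ∧ P.D = (lam : ℂ) • deriv f 0 ∧ P.Admissible g ∧
      ∀ ζ ∈ sphere (0 : ℂ) 1, g ζ ∈ U := by
  have hcpt := isCompact_closedBall (0 : ℂ) 1
  obtain ⟨δ₁, hδ₁, h₁⟩ := hcpt.exists_forall_dist_lt_mem hf hX hfX
  obtain ⟨δ₂, hδ₂, h₂⟩ := (isCompact_sphere (0 : ℂ) 1).exists_forall_dist_lt_mem
    (hf.mono sphere_subset_closedBall) hU hfU
  obtain ⟨δ₃, hδ₃, h₃⟩ := (hcpt.diff (isOpen_ball (x := (0 : ℂ)) (ε := r))).exists_forall_dist_lt_mem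
    (hf.mono Set.sdiff_subset) hK.isOpen_compl fun ζ hζ => hfK ζ hζ.1 (by simpa using hζ.2)
  set η := min ε (min δ₁ (min δ₂ δ₃))
  have hη : 0 < η := lt_min hε (lt_min hδ₁ (lt_min hδ₂ hδ₃))
  have hηε : η ≤ ε := min_le_left _ _
  have hη₁ : η ≤ δ₁ := (min_le_right _ _).trans (min_le_left _ _)
  have hη₂ : η ≤ δ₂ := (min_le_right _ _).trans ((min_le_right _ _).trans (min_le_left _ _))
  have hη₃ : η ≤ δ₃ := (min_le_right _ _).trans ((min_le_right _ _).trans (min_le_right _ _))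
  obtain ⟨δ, hδ, hunif⟩ := Metric.uniformContinuousOn_iff.1
    (hcpt.uniformContinuousOn_of_continuous hf) η hη
  obtain ⟨lam, hlam, hlam1⟩ := exists_between (max_lt hr1 (sub_lt_self 1 hδ))
  have hlamr : r < lam := (le_max_left _ _).trans_lt hlam
  have hlamδ : 1 - δ < lam := (le_max_right _ _).trans_lt hlam
  have hlam0 : 0 < lam := hr0.trans hlamr
  have hnorm : ∀ ζ : ℂ, ‖(lam : ℂ) * ζ‖ = lam * ‖ζ‖ := fun ζ => by
    rw [norm_mul, Complex.norm_real, Real.norm_eq_abs, abs_of_pos hlam0]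
  have hd : ∀ ζ ∈ closedBall (0 : ℂ) 1, dist (f (lam * ζ)) (f ζ) < η := fun ζ hζ => by
    have hζ1 : ‖ζ‖ ≤ 1 := by simpa using hζ
    refine hunif _ ?_ _ hζ ?_
    · rw [mem_closedBall, dist_zero_right, hnorm]; nlinarith [norm_nonneg ζ]
    · have : (lam : ℂ) * ζ - ζ = ((lam - 1 : ℝ) : ℂ) * ζ := by push_cast; ring
      rw [dist_eq_norm, this, norm_mul, Complex.norm_real, Real.norm_eq_abs,
        abs_of_neg (by linarith)]
      nlinarith [norm_nonneg ζ]
  have hmaps : Set.MapsTo (fun ζ : ℂ => (lam : ℂ) * ζ) (ball 0 lam⁻¹) (ball 0 1) := fun ζ hζ => by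
    rw [mem_ball, dist_zero_right] at hζ ⊢
    rw [hnorm, ← mul_inv_cancel₀ hlam0.ne']
    exact mul_lt_mul_of_pos_left hζ hlam0
  refine ⟨lam, hlamr, hlam1, ⟨X, Ω, K, f, r, ε, (lam : ℂ) • deriv f 0, hX, hΩ, hΩX, hK, hKΩ, hr1,
    hf.mono (closedBall_subset_closedBall hr1.le)⟩, fun ζ => f (lam * ζ), rfl, rfl, rfl, rfl, rfl,
    rfl, rfl, ⟨⟨lam⁻¹, (one_lt_inv₀ hlam0).2 hlam1, ?_⟩, ?_, ?_, ?_, ?_, ?_, ?_⟩, ?_⟩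
  · exact hf'.comp (differentiable_id.const_mul _).differentiableOn hmaps
  · exact fun ζ hζ => h₁ ζ hζ _ ((hd ζ hζ).trans_le hη₁)
  · exact fun ζ hζ => hUΩ (h₂ ζ hζ _ ((hd ζ (sphere_subset_closedBall hζ)).trans_le hη₂))
  · exact fun ζ hζ => (hd ζ (closedBall_subset_closedBall hr1.le hζ)).trans_le hηε
  · exact fun ζ hζ hr => h₃ ζ ⟨hζ, by simpa using hr⟩ _ ((hd ζ hζ).trans_le hη₃)
  · simp
  · simpa using deriv_comp_mul_left (lam : ℂ) f 0
  · exact fun ζ hζ => h₂ ζ hζ _ ((hd ζ (sphere_subset_closedBall hζ)).trans_le hη₂)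

end Start

/-- the paper's Lemma 4.1 for domains in `ℂⁿ`, `n ≥ 3`. Pushing the
boundary of a holomorphic disc from above the level `a` to above the level `b` of a
smooth function `ρ` whose Levi form has at least 2 positive eigenvalues, assuming at
most one (interior, non-degenerate) critical point between the two levels. -/
theorem push_boundary_between_levels
    (n : ℕ) (hn : 3 ≤ n)
    (X : Set (EuclideanSpace ℂ (Fin n))) (hX : IsOpen X)
    (Ω : Set (EuclideanSpace ℂ (Fin n))) (hΩ : IsOpen Ω)
    (hΩ_cpt : IsCompact (closure Ω)) (hΩX : closure Ω ⊆ X)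
    (ρ : EuclideanSpace ℂ (Fin n) → ℝ) (hρ : ContDiffOn ℝ (⊤ : ℕ∞) ρ Ω)
    (a b : ℝ)
    (hlevel_cpt : IsCompact {z ∈ Ω | a ≤ ρ z ∧ ρ z ≤ b})
    (hLevi : ∀ z ∈ Ω, ∃ V : Submodule ℂ (EuclideanSpace ℂ (Fin n)),
      Module.finrank ℂ V = 2 ∧ ∀ w ∈ V, w ≠ 0 →
        0 < fderiv ℝ (fderiv ℝ ρ) z w w
            + fderiv ℝ (fderiv ℝ ρ) z (Complex.I • w) (Complex.I • w))
    -- at most one critical point in `{z ∈ Ω | a ≤ ρ z ≤ b}` …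
    (hcrit_unique : ∀ q ∈ {z ∈ Ω | a ≤ ρ z ∧ ρ z ≤ b},
      ∀ q' ∈ {z ∈ Ω | a ≤ ρ z ∧ ρ z ≤ b},
      fderiv ℝ ρ q = 0 → fderiv ℝ ρ q' = 0 → q = q')
    -- … and any such critical point lies strictly between the levels and is non-degenerate.
    (hcrit : ∀ q ∈ {z ∈ Ω | a ≤ ρ z ∧ ρ z ≤ b}, fderiv ℝ ρ q = 0 →
      a < ρ q ∧ ρ q < b ∧
      ∀ w : EuclideanSpace ℂ (Fin n), w ≠ 0 →
        ∃ w' : EuclideanSpace ℂ (Fin n), fderiv ℝ (fderiv ℝ ρ) q w w' ≠ 0)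
    (K : Set (EuclideanSpace ℂ (Fin n))) (hK : IsCompact K) (hKX : K ⊆ X)
    (hKΩ : K ∩ Ω = ∅)
    (f : ℂ → EuclideanSpace ℂ (Fin n))
    (hf_cont : ContinuousOn f (closedBall (0 : ℂ) 1))
    (hf_hol : DifferentiableOn ℂ f (ball (0 : ℂ) 1))
    (hf_mem : ∀ ζ ∈ closedBall (0 : ℂ) 1, f ζ ∈ X)
    (hf_bd : f '' sphere (0 : ℂ) 1 ⊆ {z ∈ Ω | a < ρ z})
    (r : ℝ) (hr0 : 0 < r) (hr1 : r < 1)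
    (hfK : (f '' (closedBall (0 : ℂ) 1 \ ball (0 : ℂ) r)) ∩ K = ∅)
    (ε : ℝ) (hε : 0 < ε) :
    ∃ (g : ℂ → EuclideanSpace ℂ (Fin n)) (lam : ℝ),
      ContinuousOn g (closedBall (0 : ℂ) 1) ∧
      DifferentiableOn ℂ g (ball (0 : ℂ) 1) ∧
      (∀ ζ ∈ closedBall (0 : ℂ) 1, g ζ ∈ X) ∧
      g '' sphere (0 : ℂ) 1 ⊆ {z ∈ Ω | b < ρ z} ∧
      (∀ ζ ∈ closedBall (0 : ℂ) r, dist (g ζ) (f ζ) < ε) ∧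
      (g '' (closedBall (0 : ℂ) 1 \ ball (0 : ℂ) r)) ∩ K = ∅ ∧
      g 0 = f 0 ∧
      r < lam ∧ lam < 1 ∧ deriv g 0 = lam • deriv f 0 := by
  have hρ2 : ContDiffOn ℝ 2 ρ Ω := hρ.of_le (WithTop.coe_le_coe.2 (le_top : (2 : ℕ∞) ≤ ⊤))
  have hUopen : IsOpen {z ∈ Ω | a < ρ z} :=
    hρ.continuousOn.isOpen_inter_preimage hΩ (isOpen_Ioi (a := a))
  obtain ⟨lam, hlamr, hlam1, P, g, rfl, rfl, rfl, rfl, rfl, rfl, hD, hg, hgU⟩ :=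
    exists_shrink hX hΩ (subset_closure.trans hΩX) hK.isClosed hKΩ hf_cont hf_hol hf_mem hUopen
      (fun z hz => hz.1) (fun ζ hζ => hf_bd ⟨ζ, hζ, rfl⟩) hr0 hr1
      (fun ζ hζ hr hζK => by
        have : f ζ ∈ (f '' (closedBall (0 : ℂ) 1 \ ball (0 : ℂ) r)) ∩ K :=
          ⟨⟨ζ, ⟨hζ, by simpa using hr⟩, rfl⟩, hζK⟩
        rwa [hfK] at this) hε
  obtain ⟨g', hg', hb⟩ : ∃ g', P.Admissible g' ∧ ∀ ζ ∈ sphere (0 : ℂ) 1, b < ρ (g' ζ) := by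
    by_cases h : ∃ q ∈ {z ∈ P.Ω | a ≤ ρ z ∧ ρ z ≤ b}, fderiv ℝ ρ q = 0
    · obtain ⟨q, hq, hq0⟩ := h
      obtain ⟨hqa, hqb, hnd⟩ := hcrit q hq hq0
      exact hg.exists_push_past_critical hρ2 hLevi hlevel_cpt (hΩ_cpt.isBounded.subset subset_closure)
        hq.1 hqa hqb hq0 hnd
        (fun z hz h₀ h₁ hz0 => hcrit_unique z ⟨hz, h₀, h₁⟩ q hq hz0 hq0) fun ζ hζ => (hgU ζ hζ).2
    · push Not at h
      exact hg.exists_push_level_of_noncritical hρ2 hLevi hlevel_cpt le_rfl le_rfl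
        (fun z hz h₀ h₁ => h z ⟨hz, h₀, h₁⟩) fun ζ hζ => (hgU ζ hζ).2
  obtain ⟨R, hR, hdiff⟩ := hg'.exists_differentiableOn
  refine ⟨g', lam, hg'.continuousOn, hdiff.mono (ball_subset_ball hR.le), hg'.mem_X, ?_,
    hg'.dist_lt, ?_, hg'.apply_zero, hlamr, hlam1, ?_⟩
  · rintro _ ⟨ζ, hζ, rfl⟩
    exact ⟨hg'.mem_Ω ζ hζ, hb ζ hζ⟩
  · rw [Set.eq_empty_iff_forall_notMem]
    rintro _ ⟨⟨ζ, hζ, rfl⟩, hζK⟩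
    exact hg'.notMem_K ζ hζ.1 (by simpa using hζ.2) hζK
  · rw [hg'.deriv_zero, hD, ← Complex.coe_algebraMap, algebraMap_smul]
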